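/- arXiv:2206.00503 — 3 statements merged into one kernel-verified Lean document; each statement's English description precedes it below -/
import Mathlib

section
/- Let r ≥ 1 be an integer and let 𝒜, ℬ be the corank-one canonical matrices of size 2r+1. Then the 5-dimensional complex Lie algebra 𝔤(𝒜,ℬ), with bracket the matrix commutator [X,Y] = XY − YX, is isomorphic to the semidirect product 𝔰𝔩₂ ⋉ ℂ². Concretely, there exists a ℂ-basis C₁, C₂, 𝒳, 𝒴, 𝒵 of 𝔤(𝒜,ℬ) satisfying the commutator relations: [C₁,C₂] = 0; [𝒳,𝒴] = 𝒵, [𝒵,𝒳] = 2𝒳, [𝒵,𝒴] = −2𝒴; [C₁,𝒳] = 𝒳, [C₂,𝒳] = −𝒳, [C₁,𝒴] = −𝒴, [C₂,𝒴] = 𝒴, [C₁,𝒵] = 0, [C₂,𝒵] = 0. -/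
open Matrix

/-- The first corank-one canonical matrix `𝒜` of size `2r + 1`:
`𝒜_{p, r+p} = 𝒜_{r+p, p} = 1` for `0 ≤ p ≤ r − 1`, all other entries `0`. -/
def corankOneA (r : ℕ) : Matrix (Fin (2 * r + 1)) (Fin (2 * r + 1)) ℂ :=
  Matrix.of fun p q =>
    if ((q : ℕ) = (p : ℕ) + r ∧ (p : ℕ) < r) ∨ ((p : ℕ) = (q : ℕ) + r ∧ (q : ℕ) < r)
    then 1 else 0

/-- The second corank-one canonical matrix `ℬ` of size `2r + 1`:
`ℬ_{p, r+p+1} = ℬ_{r+p+1, p} = 1` for `0 ≤ p ≤ r − 1`, all other entries `0`. -/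
def corankOneB (r : ℕ) : Matrix (Fin (2 * r + 1)) (Fin (2 * r + 1)) ℂ :=
  Matrix.of fun p q =>
    if ((q : ℕ) = (p : ℕ) + r + 1 ∧ (p : ℕ) < r) ∨ ((p : ℕ) = (q : ℕ) + r + 1 ∧ (q : ℕ) < r)
    then 1 else 0


/-- The ℂ-linear map `X ↦ XᵀM + MX`. -/
noncomputable def congrDeriv {n : Type*} [Fintype n] (M : Matrix n n ℂ) :
    Matrix n n ℂ →ₗ[ℂ] Matrix n n ℂ where
  toFun X := Xᵀ * M + M * X
  map_add' X Y := by
    simp only [Matrix.transpose_add, Matrix.add_mul, Matrix.mul_add]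
    abel
  map_smul' c X := by
    simp only [Matrix.transpose_smul, Matrix.smul_mul, Matrix.mul_smul, smul_add,
      RingHom.id_apply]

/-- The Lie algebra `𝔤(A,B)` of the stabilizer of the pencil spanned by `A` and `B`,
as a ℂ-subspace of the space of matrices: all `X` such that `XᵀA + AX` and
`XᵀB + BX` lie in the span of `{A, B}`. -/
noncomputable def stabAlg {n : Type*} [Fintype n] (A B : Matrix n n ℂ) :
    Submodule ℂ (Matrix n n ℂ) :=
  Submodule.comap (congrDeriv A) (Submodule.span ℂ {A, B}) ⊓
  Submodule.comap (congrDeriv B) (Submodule.span ℂ {A, B})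


/-- monomial matrix: row `p` has its only entry `f p` in column `s p`. -/
def mono (n : ℕ) (f : ℕ → ℂ) (s : ℕ → ℕ) : Matrix (Fin n) (Fin n) ℂ :=
  Matrix.of fun p q => if (q : ℕ) = s p then f p else 0

/-- extension by zero -/
noncomputable def extz {n : ℕ} (X : Matrix (Fin n) (Fin n) ℂ) (p q : ℕ) : ℂ :=
  if h : p < n ∧ q < n then X ⟨p, h.1⟩ ⟨q, h.2⟩ else 0

lemma mono_mul_apply {n : ℕ} (f : ℕ → ℂ) (s : ℕ → ℕ) (X : Matrix (Fin n) (Fin n) ℂ)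
    (p q : Fin n) : (mono n f s * X) p q = f p * extz X (s p) q := by
  rw [Matrix.mul_apply]
  simp only [mono, Matrix.of_apply, ite_mul, zero_mul]
  by_cases h : s p < n
  · rw [Finset.sum_eq_single (⟨s p, h⟩ : Fin n)]
    · simp [extz, h]
    · intro b _ hb
      rw [if_neg]
      intro h'
      exact hb (Fin.ext h')
    · simp
  · simp only [extz, h, false_and, dite_false, mul_zero]
    apply Finset.sum_eq_zero
    intro b _
    rw [if_neg]
    have := b.2
    omega

lemma extz_mono {n : ℕ} (f : ℕ → ℂ) (s : ℕ → ℕ) (p q : ℕ) (hq : q < n) :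
    extz (mono n f s) p q = if p < n ∧ q = s p then f p else 0 := by
  unfold extz mono
  by_cases hp : p < n <;> simp [hp, hq]

lemma mono_mul_mono {n : ℕ} (f g : ℕ → ℂ) (s t : ℕ → ℕ) 
    (p q : Fin n) : (mono n f s * mono n g t) p q =
      f p * if s p < n ∧ (q : ℕ) = t (s p) then g (s p) else 0 := by
  rw [mono_mul_apply, extz_mono _ _ _ _ q.2]

lemma mono_apply {n : ℕ} (f : ℕ → ℂ) (s : ℕ → ℕ) (p q : Fin n) :
   mono n f s p q = if (q : ℕ) = s p then f p else 0 := rfl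

noncomputable def fX (r p : ℕ) : ℂ := if p < r then (if p = 0 then 0 else (p : ℂ) - r) else 2 * r - p
def sX (r p : ℕ) : ℕ := if p < r then p - 1 else p + 1
noncomputable def fY (r p : ℕ) : ℂ := if p < r then (if p + 1 = r then 0 else -((p : ℂ) + 1)) else p - r
def sY (r p : ℕ) : ℕ := if p < r then p + 1 else p - 1
noncomputable def fZ (r p : ℕ) : ℂ := if p < r then 2 * (p : ℂ) + 1 - r else 3 * r - 2 * p
noncomputable def fC1 (r p : ℕ) : ℂ := if p < r then (2 * (p : ℂ) + 1 - r) / 2 + 1 else (3 * r - 2 * p) / 2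
noncomputable def fC2 (r p : ℕ) : ℂ := if p < r then -(2 * (p : ℂ) + 1 - r) / 2 else -(3 * r - 2 * p) / 2 + 1
noncomputable def fA (r p : ℕ) : ℂ := if p = 2 * r then 0 else 1
def sA (r p : ℕ) : ℕ := if p < r then p + r else p - r
noncomputable def fB (r p : ℕ) : ℂ := if p = r then 0 else 1
def sB (r p : ℕ) : ℕ := if p < r then p + r + 1 else p - r - 1

lemma A_eq (r : ℕ) : corankOneA r = mono _ (fA r) (sA r) := by
  ext p q
  have := p.2
  have := q.2
  simp only [corankOneA, mono_apply, fA, sA, Matrix.of_apply]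
  split_ifs <;> first | rfl | omega

lemma B_eq (r : ℕ) : corankOneB r = mono _ (fB r) (sB r) := by
  ext p q
  have := p.2
  have := q.2
  simp only [corankOneB, mono_apply, fB, sB, Matrix.of_apply]
  split_ifs <;> first | rfl | omega

lemma A_symm (r : ℕ) : (corankOneA r)ᵀ = corankOneA r := by
  ext p q
  simp only [corankOneA, Matrix.of_apply, Matrix.transpose_apply, or_comm]

lemma B_symm (r : ℕ) : (corankOneB r)ᵀ = corankOneB r := by
  ext p q
  simp only [corankOneB, Matrix.of_apply, Matrix.transpose_apply, or_comm]

lemma cA_apply (r : ℕ) (X) (p q) : congrDeriv (corankOneA r) X p q =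
    fA r q * extz X (sA r q) p + fA r p * extz X (sA r p) q := by
  have : congrDeriv (corankOneA r) X = (corankOneA r * X)ᵀ + corankOneA r * X := by
    simp [congrDeriv, Matrix.transpose_mul, A_symm]
  rw [this, A_eq, Matrix.add_apply, Matrix.transpose_apply, mono_mul_apply, mono_mul_apply]

lemma cB_apply (r : ℕ) (X) (p q) : congrDeriv (corankOneB r) X p q =
    fB r q * extz X (sB r q) p + fB r p * extz X (sB r p) q := by
  have : congrDeriv (corankOneB r) X = (corankOneB r * X)ᵀ + corankOneB r * X := by
    simp [congrDeriv, Matrix.transpose_mul, B_symm]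
  rw [this, B_eq, Matrix.add_apply, Matrix.transpose_apply, mono_mul_apply, mono_mul_apply]

noncomputable abbrev mX (r : ℕ) : Matrix (Fin (2 * r + 1)) (Fin (2 * r + 1)) ℂ := mono (2 * r + 1) (fX r) (sX r)
noncomputable abbrev mY (r : ℕ) : Matrix (Fin (2 * r + 1)) (Fin (2 * r + 1)) ℂ := mono (2 * r + 1) (fY r) (sY r)
noncomputable abbrev mZ (r : ℕ) : Matrix (Fin (2 * r + 1)) (Fin (2 * r + 1)) ℂ := mono (2 * r + 1) (fZ r) id
noncomputable abbrev mC1 (r : ℕ) : Matrix (Fin (2 * r + 1)) (Fin (2 * r + 1)) ℂ := mono (2 * r + 1) (fC1 r) id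
noncomputable abbrev mC2 (r : ℕ) : Matrix (Fin (2 * r + 1)) (Fin (2 * r + 1)) ℂ := mono (2 * r + 1) (fC2 r) id
lemma key_anti (r : ℕ) (R : ℕ → ℕ → ℂ) (h1 : ∀ i j, i < r → j < r → R i j + R j i = 0)
    (h2 : ∀ i j, i < r → j < r → R (i + 1) j + R (j + 1) i = 0) :
    ∀ i j, i ≤ r → j < r → R i j = 0 := by
  have sh : ∀ k i j, i + k ≤ r → j + k < r → R i (j + k) = R (i + k) j := by
    intro k
    induction k with
    | zero => intros; rfl
    | succ k ih =>
      intro i j hi hj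
      have a := ih (i + 1) j (by omega) (by omega)
      have b := h2 i (j + k) (by omega) (by omega)
      have c := h1 i (j + k + 1) (by omega) (by omega)
      rw [show i + (k + 1) = i + 1 + k by ring, ← a, ← add_assoc]
      linear_combination c - b
  have le : ∀ i j, i ≤ j → j < r → R i j = 0 := by
    intro i j hij hj
    have a := sh (j - i) i i (by omega) (by omega)
    rw [show i + (j - i) = j by omega] at a
    have b := h1 i j (by omega) hj
    linear_combination (a + b) / 2
  have lt : ∀ i j, i < r → j < r → R i j = 0 := by
    intro i j hi hj
    rcases le_total i j with h | h
    · exact le i j h hj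
    · have := h1 i j hi hj
      rw [le j i h hi] at this
      simpa using this
  intro i j hi hj
  rcases hi.lt_or_eq with h | h
  · exact lt i j h hj
  · obtain ⟨m, rfl⟩ : ∃ m, r = m + 1 := ⟨r - 1, by omega⟩
    subst h
    have := h2 m j (by omega) hj
    by_cases hjm : j = m
    · subst hjm
      linear_combination this / 2
    · rw [lt (j + 1) m (by omega) (by omega)] at this
      simpa using this

lemma key_toep (r : ℕ) (S : ℕ → ℕ → ℂ) (h1 : ∀ i j, i < r → j < r → S (i + 1) (j + 1) = S i j)
    (h2 : ∀ i, i < r → S i r = 0) (h3 : ∀ i, i < r → S (i + 1) 0 = 0) :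
    ∀ i j, i ≤ r → j ≤ r → S i j = if i = j then S 0 0 else 0 := by
  have sh : ∀ k i j, i + k ≤ r → j + k ≤ r → S (i + k) (j + k) = S i j := by
    intro k
    induction k with
    | zero => intros; rfl
    | succ k ih =>
      intro i j hi hj
      rw [← ih i j (by omega) (by omega), ← add_assoc, ← add_assoc]
      exact h1 _ _ (by omega) (by omega)
  intro i j hi hj
  rcases lt_trichotomy i j with h | h | h
  · rw [if_neg (by omega), ← sh (r - j) i j (by omega) (by omega),
      show j + (r - j) = r by omega]
    exact h2 _ (by omega)
  · subst h
    simpa using sh i 0 0 (by omega) (by omega)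
  · rw [if_neg (by omega)]
    have := sh j (i - j) 0 (by omega) (by omega)
    rw [show i - j + j = i by omega, zero_add] at this
    rw [this]
    have := h3 (i - j - 1) (by omega)
    rwa [show i - j - 1 + 1 = i - j by omega] at this

lemma key (r : ℕ) (X : Matrix (Fin (2 * r + 1)) (Fin (2 * r + 1)) ℂ)
    (hA : congrDeriv (corankOneA r) X = 0) (hB : congrDeriv (corankOneB r) X = 0) :
    ∃ t : ℂ, X = t • mono (2 * r + 1) (fun p => if p < r then -1 else 1) id := by
  have eA : ∀ p q, p < 2 * r + 1 → q < 2 * r + 1 →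
      fA r q * extz X (sA r q) p + fA r p * extz X (sA r p) q = 0 := by
    intro p q hp hq
    rw [← cA_apply r X ⟨p, hp⟩ ⟨q, hq⟩, hA]; rfl
  have eB : ∀ p q, p < 2 * r + 1 → q < 2 * r + 1 →
      fB r q * extz X (sB r q) p + fB r p * extz X (sB r p) q = 0 := by
    intro p q hp hq
    rw [← cB_apply r X ⟨p, hp⟩ ⟨q, hq⟩, hB]; rfl
  clear hA hB
  set x := extz X with hx
  have hXx : ∀ p q : Fin (2 * r + 1), X p q = x p q := by
    intro p q
    have := p.2
    have := q.2
    rw [hx, extz, dif_pos ⟨p.2, q.2⟩]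
  have A1 : ∀ i, i < r → fA r i = 1 ∧ sA r i = i + r := by
    intro i hi
    simp only [fA, sA]
    exact ⟨if_neg (by omega), if_pos hi⟩
  have A2 : ∀ i, i < r → fA r (i + r) = 1 ∧ sA r (i + r) = i := by
    intro i hi
    simp only [fA, sA]
    exact ⟨if_neg (by omega), by rw [if_neg (by omega)]; omega⟩
  have A3 : fA r (r + r) = 0 := by
    simp only [fA]
    exact if_pos (by omega)
  have B1 : ∀ i, i < r → fB r i = 1 ∧ sB r i = i + 1 + r := by
    intro i hi
    simp only [fB, sB]
    exact ⟨if_neg (by omega), by rw [if_pos hi]; omega⟩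
  have B2 : ∀ i, i < r → fB r (i + 1 + r) = 1 ∧ sB r (i + 1 + r) = i := by
    intro i hi
    simp only [fB, sB]
    exact ⟨if_neg (by omega), by rw [if_neg (by omega)]; omega⟩
  have B3 : fB r (0 + r) = 0 := by
    simp [fB]
  have hR := key_anti r (fun i j => x (i + r) j)
    (by
      intro i j hi hj
      have := eA j i (by omega) (by omega)
      simpa [A1 i hi, A1 j hj] using this)
    (by
      intro i j hi hj
      have := eB j i (by omega) (by omega)
      simpa [B1 i hi, B1 j hj] using this)
  have hQ := key_anti r (fun i j => x j (i + r))
    (by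
      intro i j hi hj
      have := eA (i + r) (j + r) (by omega) (by omega)
      simpa [A2 i hi, A2 j hj] using this)
    (by
      intro i j hi hj
      have := eB (i + 1 + r) (j + 1 + r) (by omega) (by omega)
      simpa [B2 i hi, B2 j hj] using this)
  have hP : ∀ i j, i < r → j < r → x i j = - x (j + r) (i + r) := by
    intro i j hi hj
    have := eA j (i + r) (by omega) (by omega)
    rw [(A1 j hj).1, (A1 j hj).2, (A2 i hi).1, (A2 i hi).2] at this
    linear_combination this
  have hS := key_toep r (fun i j => x (i + r) (j + r))
    (by
      intro i j hi hj
      have := eB i (j + 1 + r) (by omega) (by omega)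
      rw [(B1 i hi).1, (B1 i hi).2, (B2 j hj).1, (B2 j hj).2] at this
      have h2 := hP j i hj hi
      show x _ _ = x _ _
      linear_combination this - h2)
    (by
      intro i hi
      have := eA i (r + r) (by omega) (by omega)
      rw [(A1 i hi).1, (A1 i hi).2, A3] at this
      show x _ _ = _
      linear_combination this)
    (by
      intro i hi
      have := eB i (0 + r) (by omega) (by omega)
      rw [(B1 i hi).1, (B1 i hi).2, B3] at this
      show x _ _ = _
      linear_combination this)
  beta_reduce at hR hQ hS
  refine ⟨x (0 + r) (0 + r), ?_⟩
  ext p q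
  rw [hXx, Matrix.smul_apply, mono_apply]
  obtain ⟨p, hp⟩ := p
  obtain ⟨q, hq⟩ := q
  simp only [id, smul_eq_mul]
  by_cases h1 : p < r <;> by_cases h2 : q < r
  · rw [hP p q h1 h2, hS q p (by omega) (by omega)]
    split_ifs <;> simp
  · obtain ⟨q, rfl⟩ : ∃ m, q = m + r := ⟨q - r, by omega⟩
    rw [hQ q p (by omega) h1, if_neg (by omega), mul_zero]
  · obtain ⟨p, rfl⟩ : ∃ m, p = m + r := ⟨p - r, by omega⟩
    rw [hR p q (by omega) h2, if_neg (by omega), mul_zero]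
  · obtain ⟨q, rfl⟩ : ∃ m, q = m + r := ⟨q - r, by omega⟩
    obtain ⟨p, rfl⟩ : ∃ m, p = m + r := ⟨p - r, by omega⟩
    rw [hS p q (by omega) (by omega), if_neg h1]
    split_ifs <;> first | omega | simp

lemma br_diag {n : ℕ} (d f : ℕ → ℂ) (s : ℕ → ℕ) (c : ℂ)
    (h : ∀ p, p < n → f p ≠ 0 → s p < n ∧ d p - d (s p) = c) :
    mono n d id * mono n f s - mono n f s * mono n d id = c • mono n f s := by
  ext p q
  rw [Matrix.sub_apply, mono_mul_mono, mono_mul_mono, Matrix.smul_apply, mono_apply]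
  simp only [id, p.2, true_and, smul_eq_mul]
  by_cases h0 : f p = 0
  · simp [h0]
  · obtain ⟨h1, h2⟩ := h p p.2 h0
    simp only [h1, true_and, ← h2]
    split_ifs <;> ring

lemma fX_ne (r p : ℕ) (hp : p < 2 * r + 1) (h : fX r p ≠ 0) :
    (∃ m, p = m + 1 ∧ m + 1 < r) ∨ (r ≤ p ∧ p < 2 * r) := by
  by_contra hc
  apply h
  unfold fX
  split_ifs with h1 h2
  · rfl
  · exact absurd (Or.inl ⟨p - 1, by omega, by omega⟩) hc
  · have : p = 2 * r := by
      by_contra h3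
      exact hc (Or.inr ⟨by omega, by omega⟩)
    subst this
    push_cast
    ring

lemma fY_ne (r p : ℕ) (h : fY r p ≠ 0) :
    (p + 1 < r) ∨ (∃ m, p = m + 1 ∧ r ≤ m) := by
  by_contra hc
  apply h
  unfold fY
  split_ifs with h1 h2
  · rfl
  · exact absurd (Or.inl (by omega)) hc
  · have : p = r := by
      by_contra h3
      exact hc (Or.inr ⟨p - 1, by omega, by omega⟩)
    subst this
    ring

lemma brDX (r : ℕ) (d : ℕ → ℂ) (c : ℂ) (h1 : ∀ m, m + 1 < r → d (m + 1) - d m = c)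
    (h2 : ∀ m, r ≤ m → d m - d (m + 1) = c) :
    mono (2 * r + 1) d id * mX r - mX r * mono (2 * r + 1) d id = c • mX r := by
  apply br_diag
  intro p hp hf
  rcases fX_ne r p hp hf with ⟨m, rfl, hm⟩ | ⟨h3, h4⟩
  · simp only [sX, if_pos hm]
    exact ⟨by omega, h1 m hm⟩
  · simp only [sX, if_neg (not_lt.2 h3)]
    exact ⟨by omega, h2 p h3⟩

lemma brDY (r : ℕ) (d : ℕ → ℂ) (c : ℂ) (h1 : ∀ m, m + 1 < r → d m - d (m + 1) = c)
    (h2 : ∀ m, r ≤ m → d (m + 1) - d m = c) :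
    mono (2 * r + 1) d id * mY r - mY r * mono (2 * r + 1) d id = c • mY r := by
  apply br_diag
  intro p hp hf
  rcases fY_ne r p hf with hm | ⟨m, rfl, hm⟩
  · simp only [sY, if_pos (show p < r by omega)]
    exact ⟨by omega, h1 p hm⟩
  · simp only [sY, if_neg (show ¬ m + 1 < r by omega)]
    exact ⟨by omega, h2 m hm⟩

lemma d_step (r : ℕ) (u v w : ℂ) (d : ℕ → ℂ)
    (hd : d = fun p => if p < r then w * (2 * (p : ℂ) + 1 - r) + u
      else w * (3 * r - 2 * p) + v) :
    (∀ m, m + 1 < r → d (m + 1) - d m = 2 * w) ∧ (∀ m, r ≤ m → d m - d (m + 1) = 2 * w) := by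
  subst hd
  constructor
  · intro m hm
    simp only [if_pos hm, if_pos (show m < r by omega)]
    push_cast; ring
  · intro m hm
    simp only [if_neg (show ¬ m + 1 < r by omega), if_neg (show ¬ m < r by omega)]
    push_cast; ring

lemma brd (r : ℕ) (u v w : ℂ) (d : ℕ → ℂ)
    (hd : d = fun p => if p < r then w * (2 * (p : ℂ) + 1 - r) + u
      else w * (3 * r - 2 * p) + v) :
    mono (2 * r + 1) d id * mX r - mX r * mono (2 * r + 1) d id = (2 * w) • mX r ∧
    mono (2 * r + 1) d id * mY r - mY r * mono (2 * r + 1) d id = (-(2 * w)) • mY r := by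
  obtain ⟨h1, h2⟩ := d_step r u v w d hd
  refine ⟨brDX r d _ h1 h2, brDY r d _ ?_ ?_⟩
  · intro m hm; rw [← h1 m hm]; ring
  · intro m hm; rw [← h2 m hm]; ring

lemma fZ_eq (r : ℕ) : fZ r = fun p => if p < r then 1 * (2 * (p : ℂ) + 1 - r) + 0
      else 1 * (3 * r - 2 * p) + 0 := by
  funext p; simp only [fZ]; split_ifs <;> ring
lemma fC1_eq (r : ℕ) : fC1 r = fun p => if p < r then (1/2) * (2 * (p : ℂ) + 1 - r) + 1
      else (1/2) * (3 * r - 2 * p) + 0 := by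
  funext p; simp only [fC1]; split_ifs <;> ring
lemma fC2_eq (r : ℕ) : fC2 r = fun p => if p < r then (-1/2) * (2 * (p : ℂ) + 1 - r) + 0
      else (-1/2) * (3 * r - 2 * p) + 1 := by
  funext p; simp only [fC2]; split_ifs <;> ring

lemma brD (r : ℕ) (f g : ℕ → ℂ) : mono (2 * r + 1) f id * mono (2 * r + 1) g id -
    mono (2 * r + 1) g id * mono (2 * r + 1) f id = 0 := by
  ext p q
  rw [Matrix.sub_apply, mono_mul_mono, mono_mul_mono]
  simp only [id, p.2, true_and, Matrix.zero_apply]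
  split_ifs <;> ring

lemma brXY (r : ℕ) : mX r * mY r - mY r * mX r = mZ r := by
  ext p q
  rw [Matrix.sub_apply, mono_mul_mono, mono_mul_mono]
  show _ = if (q : ℕ) = id (p : ℕ) then fZ r p else 0
  obtain ⟨p, hp⟩ := p
  obtain ⟨q, hq⟩ := q
  rcases lt_or_ge p r with h1 | h1
  · rcases p with _ | p
    all_goals
      simp only [fX, fY, fZ, sX, sY, id, if_pos h1]
      split_ifs <;> first | (exfalso; omega) | (subst_vars; push_cast; ring1) | skip
  · rcases h1.eq_or_lt with h | h
    · subst h
      simp only [fX, fY, fZ, sX, sY, id, lt_irrefl, if_false, if_neg (show ¬ r + 1 < r by omega),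
        sub_self, zero_mul]
      split_ifs <;> first | (exfalso; omega) | (subst_vars; push_cast; ring1) | skip
      have : r = 0 := by omega
      subst this
      simp
    · obtain ⟨m, rfl⟩ : ∃ m, p = m + 1 := ⟨p - 1, by omega⟩
      simp only [fX, fY, fZ, sX, sY, id, if_neg (not_lt.2 h1),
        if_neg (show ¬ m + 1 + 1 < r by omega), Nat.add_sub_cancel,
        if_neg (show ¬ m < r by omega), show m < 2 * r + 1 by omega, true_and]
      by_cases hm : m + 1 + 1 < 2 * r + 1
      · simp only [hm, true_and]
        split_ifs
        · push_cast; ring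
        · ring
      · have e : (m : ℂ) + 1 = 2 * r := by
          have : m + 1 = 2 * r := by omega
          exact_mod_cast this
        simp only [hm, false_and, if_false]
        split_ifs
        · push_cast
          linear_combination ((m : ℂ) + 2 - r) * e
        · ring

lemma c_diag {n : ℕ} (M : Matrix (Fin n) (Fin n) ℂ) (d : ℕ → ℂ) (c : ℂ)
    (h : ∀ p q, M p q ≠ 0 → d p + d q = c) : congrDeriv M (mono n d id) = c • M := by
  have hd : mono n d id = Matrix.diagonal (fun p : Fin n => d p) := by
    ext p q
    simp only [mono_apply, Matrix.diagonal_apply, id, Fin.ext_iff, eq_comm]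
  ext p q
  have : congrDeriv M (mono n d id) p q = (d p + d q) * M p q := by
    rw [hd]
    simp only [congrDeriv, LinearMap.coe_mk, AddHom.coe_mk, Matrix.diagonal_transpose,
      Matrix.add_apply, Matrix.diagonal_mul, Matrix.mul_diagonal]
    ring
  rw [this, Matrix.smul_apply, smul_eq_mul]
  by_cases h0 : M p q = 0
  · simp [h0]
  · rw [h p q h0]

lemma cd (r : ℕ) (u v w : ℂ) (d : ℕ → ℂ)
    (hd : d = fun p => if p < r then w * (2 * (p : ℂ) + 1 - r) + u
      else w * (3 * r - 2 * p) + v) :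
    congrDeriv (corankOneA r) (mono (2 * r + 1) d id) = (u + v + w) • corankOneA r ∧
    congrDeriv (corankOneB r) (mono (2 * r + 1) d id) = (u + v - w) • corankOneB r := by
  constructor
  · apply c_diag
    intro p q h
    have h' : ((q : ℕ) = (p : ℕ) + r ∧ (p : ℕ) < r) ∨ ((p : ℕ) = (q : ℕ) + r ∧ (q : ℕ) < r) := by
      by_contra hc
      exact h (if_neg hc)
    subst hd
    rcases h' with ⟨h1, h2⟩ | ⟨h1, h2⟩
    all_goals
      simp only [h1, if_pos h2, if_neg (Nat.not_lt.2 (Nat.le_add_left r _))]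
      push_cast
      ring
  · apply c_diag
    intro p q h
    have h' : ((q : ℕ) = (p : ℕ) + r + 1 ∧ (p : ℕ) < r) ∨
        ((p : ℕ) = (q : ℕ) + r + 1 ∧ (q : ℕ) < r) := by
      by_contra hc
      exact h (if_neg hc)
    have h3 : ∀ m, ¬ (m + r + 1 < r) := by intro m; omega
    subst hd
    rcases h' with ⟨h1, h2⟩ | ⟨h1, h2⟩
    all_goals
      simp only [h1, if_pos h2, if_neg (h3 _)]
      push_cast
      ring

lemma sym_ext (r : ℕ) (F G : Matrix (Fin (2 * r + 1)) (Fin (2 * r + 1)) ℂ)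
    (hF : ∀ p q, F p q = F q p) (hG : ∀ p q, G p q = G q p)
    (h1 : ∀ i j (hi : i < r) (hj : j < r), F ⟨i, by omega⟩ ⟨j, by omega⟩ = G ⟨i, by omega⟩ ⟨j, by omega⟩)
    (h2 : ∀ i j (hi : i < r) (hj : j ≤ r),
      F ⟨i, by omega⟩ ⟨j + r, by omega⟩ = G ⟨i, by omega⟩ ⟨j + r, by omega⟩)
    (h3 : ∀ i j (hi : i ≤ r) (hj : j ≤ r),
      F ⟨i + r, by omega⟩ ⟨j + r, by omega⟩ = G ⟨i + r, by omega⟩ ⟨j + r, by omega⟩) : F = G := by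
  ext p q
  obtain ⟨p, hp⟩ := p
  obtain ⟨q, hq⟩ := q
  rcases lt_or_ge p r with a | a <;> rcases lt_or_ge q r with b | b
  · exact h1 p q a b
  · obtain ⟨q, rfl⟩ : ∃ m, q = m + r := ⟨q - r, by omega⟩
    exact h2 p q a (by omega)
  · obtain ⟨p, rfl⟩ : ∃ m, p = m + r := ⟨p - r, by omega⟩
    rw [hF, hG]
    exact h2 q p b (by omega)
  · obtain ⟨q, rfl⟩ : ∃ m, q = m + r := ⟨q - r, by omega⟩
    obtain ⟨p, rfl⟩ : ∃ m, p = m + r := ⟨p - r, by omega⟩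
    exact h3 p q (by omega) (by omega)

lemma A_sub (r p : ℕ) : sA r (p + r) = p := by
  unfold sA
  rw [if_neg (by omega)]; omega
lemma B_sub (r p : ℕ) : sB r (p + r) = p - 1 := by
  unfold sB
  rw [if_neg (by omega)]; omega
lemma A_lt {r p : ℕ} (h : p < r) : sA r p = p + r := if_pos h
lemma B_lt {r p : ℕ} (h : p < r) : sB r p = p + 1 + r := by
  unfold sB
  rw [if_pos h]; omega
lemma fA_lt {r p : ℕ} (h : p < r) : fA r p = 1 := if_neg (by omega)
lemma fB_lt {r p : ℕ} (h : p < r) : fB r p = 1 := if_neg (by omega)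
lemma fA_ge {r p : ℕ} : fA r (p + r) = if p = r then 0 else 1 := by
  unfold fA
  congr 1
  apply propext; omega
lemma fB_ge {r p : ℕ} : fB r (p + r) = if p = 0 then 0 else 1 := by
  unfold fB
  congr 1
  apply propext; omega

lemma c_ext (r : ℕ) (X : Matrix (Fin (2 * r + 1)) (Fin (2 * r + 1)) ℂ) (a b c d : ℂ)
    (hR : ∀ i j, i ≤ r → j < r → extz X (i + r) j = 0)
    (hQ : ∀ i j, i < r → j ≤ r → extz X i (j + r) = 0)
    (hA : ∀ i j, i < r → j ≤ r → (if j = r then 0 else extz X j i) + extz X (i + r) (j + r) =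
      a * (if j = i then 1 else 0) + b * (if j = i + 1 then 1 else 0))
    (hB : ∀ i j, i < r → j ≤ r → (if j = 0 then 0 else extz X (j - 1) i)
      + extz X (i + 1 + r) (j + r) =
      c * (if j = i then 1 else 0) + d * (if j = i + 1 then 1 else 0)) :
    congrDeriv (corankOneA r) X = a • corankOneA r + b • corankOneB r ∧
    congrDeriv (corankOneB r) X = c • corankOneA r + d • corankOneB r := by
  have G1 : ∀ u v : ℂ, ∀ p q, (u • corankOneA r + v • corankOneB r) p q =
      (u • corankOneA r + v • corankOneB r) q p := by
    intro u v p q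
    rw [← Matrix.transpose_apply (u • corankOneA r + v • corankOneB r) p q]
    rw [Matrix.transpose_add, Matrix.transpose_smul, Matrix.transpose_smul, A_symm, B_symm]
  have N1 : ∀ i j, i < r → j < r → ¬ (i = j + r) ∧ ¬ (i = j + 1 + r) := by
    intros; omega
  have N2 : ∀ i j : ℕ, (i + r = j + r ↔ i = j) := by intros; omega
  constructor
  · apply sym_ext
    · intro p q; rw [cA_apply, cA_apply, add_comm]
    · exact G1 _ _
    · intro i j hi hj
      rw [cA_apply, Matrix.add_apply, Matrix.smul_apply, Matrix.smul_apply, A_eq, B_eq,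
        mono_apply, mono_apply]
      simp only [A_lt hi, A_lt hj, B_lt hi, N1 j i hj hi, hR i j hi.le hj, hR j i hj.le hi]
      simp
    · intro i j hi hj
      rw [cA_apply, Matrix.add_apply, Matrix.smul_apply, Matrix.smul_apply, A_eq, B_eq,
        mono_apply, mono_apply]
      simp only [A_lt hi, A_sub, B_lt hi, fA_lt hi, fB_lt hi, fA_ge, N2, smul_eq_mul, ← hA i j hi hj]
      split_ifs <;> ring
    · intro i j hi hj
      rw [cA_apply, Matrix.add_apply, Matrix.smul_apply, Matrix.smul_apply, A_eq, B_eq,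
        mono_apply, mono_apply]
      simp only [A_sub, B_sub, fA_ge, fB_ge]
      rw [show (if j + r = i - 1 then (if i = 0 then (0 : ℂ) else 1) else 0) = 0 by
        split_ifs <;> first | omega | rfl]
      have e1 : (if j = r then (0 : ℂ) else 1) * extz X j (i + r) = 0 := by
        split_ifs with h
        · simp
        · rw [hQ j i (by omega) hi, mul_zero]
      have e2 : (if i = r then (0 : ℂ) else 1) * extz X i (j + r) = 0 := by
        split_ifs with h
        · simp
        · rw [hQ i j (by omega) hj, mul_zero]
      rw [e1, e2]
      split_ifs <;> first | omega | simp
  · apply sym_ext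
    · intro p q; rw [cB_apply, cB_apply, add_comm]
    · exact G1 _ _
    · intro i j hi hj
      rw [cB_apply, Matrix.add_apply, Matrix.smul_apply, Matrix.smul_apply, A_eq, B_eq,
        mono_apply, mono_apply]
      simp only [B_lt hj, A_lt hi, B_lt hi, N1 j i hj hi, hR (i + 1) j hi hj, hR (j + 1) i hj hi]
      simp
    · intro i j hi hj
      rw [cB_apply, Matrix.add_apply, Matrix.smul_apply, Matrix.smul_apply, A_eq, B_eq,
        mono_apply, mono_apply]
      simp only [A_lt hi, B_sub, B_lt hi, fA_lt hi, fB_lt hi, fB_ge, N2, smul_eq_mul, ← hB i j hi hj]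
      split_ifs <;> ring
    · intro i j hi hj
      rw [cB_apply, Matrix.add_apply, Matrix.smul_apply, Matrix.smul_apply, A_eq, B_eq,
        mono_apply, mono_apply]
      simp only [A_sub, B_sub, fA_ge, fB_ge]
      rw [show (if j + r = i - 1 then (if i = 0 then (0 : ℂ) else 1) else 0) = 0 by
        split_ifs <;> first | omega | rfl]
      have e1 : (if j = 0 then (0 : ℂ) else 1) * extz X (j - 1) (i + r) = 0 := by
        split_ifs with h
        · simp
        · rw [hQ (j - 1) i (by omega) hi, mul_zero]
      have e2 : (if i = 0 then (0 : ℂ) else 1) * extz X (i - 1) (j + r) = 0 := by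
        split_ifs with h
        · simp
        · rw [hQ (i - 1) j (by omega) hj, mul_zero]
      rw [e1, e2]
      split_ifs <;> first | omega | simp

lemma cX (r : ℕ) :
    congrDeriv (corankOneA r) (mX r) = (0 : ℂ) • corankOneA r + (1 : ℂ) • corankOneB r ∧
    congrDeriv (corankOneB r) (mX r) = (0 : ℂ) • corankOneA r + (0 : ℂ) • corankOneB r := by
  have hS : ∀ i j, j ≤ r → extz (mX r) (i + r) (j + r) = if j = i + 1 then (r : ℂ) - i else 0 := by
    intro i j hj
    rw [extz_mono _ _ _ _ (by omega)]
    simp only [fX, sX, if_neg (show ¬ i + r < r by omega)]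
    split_ifs <;> first | omega | (push_cast; ring1)
  have hP : ∀ i j, i < r → j < r → extz (mX r) i j = if i = j + 1 then (i : ℂ) - r else 0 := by
    intro i j hi hj
    rw [extz_mono _ _ _ _ (by omega)]
    simp only [fX, sX, if_pos hi]
    split_ifs <;> first | omega | rfl
  apply c_ext
  · intro i j hi hj
    rw [extz_mono _ _ _ _ (by omega)]
    simp only [sX, if_neg (show ¬ i + r < r by omega)]
    exact if_neg (by omega)
  · intro i j hi hj
    rw [extz_mono _ _ _ _ (by omega)]
    simp only [sX, fX, if_pos hi]
    split_ifs <;> first | omega | rfl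
  · intro i j hi hj
    rw [hS i j hj]
    by_cases h : j = r
    · subst h
      rw [if_pos rfl]
      split_ifs with h2 <;> first | omega | (subst h2; push_cast; ring1) | ring1
    · rw [if_neg h, hP j i (by omega) hi]
      split_ifs with h2 <;> first | omega | (subst h2; push_cast; ring1) | ring1
  · intro i j hi hj
    rw [hS (i + 1) j hj]
    rcases j with _ | j
    · simp
    · rw [if_neg (by omega), Nat.add_sub_cancel, hP j i (by omega) hi]
      split_ifs with h2 <;> first | omega | (subst h2; push_cast; ring1) | ring1

lemma cY (r : ℕ) :
    congrDeriv (corankOneA r) (mY r) = (0 : ℂ) • corankOneA r + (0 : ℂ) • corankOneB r ∧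
    congrDeriv (corankOneB r) (mY r) = (1 : ℂ) • corankOneA r + (0 : ℂ) • corankOneB r := by
  have hS : ∀ i j, i ≤ r → j ≤ r → extz (mY r) (i + r) (j + r) = if i = j + 1 then (i : ℂ) else 0 := by
    intro i j hi hj
    rw [extz_mono _ _ _ _ (by omega)]
    simp only [fY, sY, if_neg (show ¬ i + r < r by omega)]
    split_ifs <;> first | omega | (push_cast; ring1) | skip
    have : i = 0 := by omega
    subst this
    simp
  have hP : ∀ i j, i < r → j < r → extz (mY r) i j = if j = i + 1 then -((i : ℂ) + 1) else 0 := by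
    intro i j hi hj
    rw [extz_mono _ _ _ _ (by omega)]
    simp only [fY, sY, if_pos hi]
    split_ifs <;> first | omega | rfl
  apply c_ext
  · intro i j hi hj
    rw [extz_mono _ _ _ _ (by omega)]
    simp only [sY, fY, if_neg (show ¬ i + r < r by omega)]
    split_ifs
    · have : i = 0 := by omega
      subst this
      simp
    · rfl
  · intro i j hi hj
    rw [extz_mono _ _ _ _ (by omega)]
    simp only [sY, fY, if_pos hi]
    split_ifs <;> first | omega | rfl
  · intro i j hi hj
    rw [hS i j hi.le hj]
    by_cases h : j = r
    · subst h
      rw [if_pos rfl]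
      split_ifs with h2 <;> first | omega | (subst h2; push_cast; ring1) | ring1
    · rw [if_neg h, hP j i (by omega) hi]
      split_ifs with h2 <;> first | omega | (subst h2; push_cast; ring1) | ring1
  · intro i j hi hj
    rw [hS (i + 1) j hi hj]
    rcases j with _ | j
    · rw [if_pos rfl]
      split_ifs with h2 <;> first
        | omega
        | (push_cast; ring1)
        | (have : i = 0 := by omega
           subst this
           simp)
    · rw [if_neg (by omega), Nat.add_sub_cancel, hP j i (by omega) hi]
      split_ifs with h2 <;> first | omega | (subst h2; push_cast; ring1) | ring1

lemma mem_stab {r : ℕ} {X : Matrix (Fin (2 * r + 1)) (Fin (2 * r + 1)) ℂ} {a b c d : ℂ}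
    (h : congrDeriv (corankOneA r) X = a • corankOneA r + b • corankOneB r ∧
      congrDeriv (corankOneB r) X = c • corankOneA r + d • corankOneB r) :
    X ∈ stabAlg (corankOneA r) (corankOneB r) := by
  refine ⟨?_, ?_⟩
  · exact Submodule.mem_span_pair.2 ⟨a, b, h.1.symm⟩
  · exact Submodule.mem_span_pair.2 ⟨c, d, h.2.symm⟩

lemma cd' (r : ℕ) (u v w : ℂ) (d : ℕ → ℂ)
    (hd : d = fun p => if p < r then w * (2 * (p : ℂ) + 1 - r) + u
      else w * (3 * r - 2 * p) + v) :
    congrDeriv (corankOneA r) (mono (2 * r + 1) d id)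
      = (u + v + w) • corankOneA r + (0 : ℂ) • corankOneB r ∧
    congrDeriv (corankOneB r) (mono (2 * r + 1) d id)
      = (0 : ℂ) • corankOneA r + (u + v - w) • corankOneB r := by
  obtain ⟨h1, h2⟩ := cd r u v w d hd
  rw [h1, h2, zero_smul, zero_smul, add_zero, zero_add]
  exact ⟨rfl, rfl⟩

lemma lin_indep (r : ℕ) (hr : 1 ≤ r) :
    LinearIndependent ℂ ![mC1 r, mC2 r, mX r, mY r, mZ r] := by
  rw [Fintype.linearIndependent_iff]
  intro g hg
  simp only [Fin.sum_univ_five, Matrix.cons_val] at hg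
  have e : ∀ p q : ℕ, p < 2 * r + 1 → q < 2 * r + 1 →
      g 0 * (if q = p then fC1 r p else 0) + g 1 * (if q = p then fC2 r p else 0)
      + g 2 * (if q = sX r p then fX r p else 0) + g 3 * (if q = sY r p then fY r p else 0)
      + g 4 * (if q = p then fZ r p else 0) = 0 := by
    intro p q hp hq
    exact congrFun (congrFun hg ⟨p, hp⟩) ⟨q, hq⟩
  have hr0 : (r : ℂ) ≠ 0 := by
    have : r ≠ 0 := by omega
    exact_mod_cast this
  have e1 := e r (r + 1) (by omega) (by omega)
  have e2 := e (r + 1) r (by omega) (by omega)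
  have e3 := e 0 0 (by omega) (by omega)
  have e4 := e r r (by omega) (by omega)
  have e5 := e (2 * r) (2 * r) (by omega) (by omega)
  have t1 : ¬ (r + 1 = r - 1) := by omega
  have t2 : ¬ (r = r + 1 + 1) := by omega
  have t3 : ¬ (r = r - 1) := by omega
  have t4 : ¬ (2 * r < r) := by omega
  have t5 : ¬ (2 * r = 2 * r - 1) := by omega
  have t6 : 0 < r := by omega
  simp [sX, sY, fX, fY, t1] at e1
  simp [sX, sY, fX, fY, t2] at e2
  simp [sX, sY, fX, fY, fC1, fC2, fZ, t6] at e3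
  simp [sX, sY, fX, fY, fC1, fC2, fZ, t3] at e4
  simp [sX, sY, fX, fY, fC1, fC2, fZ, t4, t5] at e5
  have g2 : g 2 = 0 := by
    rcases e1 with h | h
    · exact h
    · exact absurd (by linear_combination h) hr0
  have g1 : g 1 = 0 := by linear_combination (e4 + e5) / 2
  have k : g 0 / 2 + g 4 = 0 := by
    have : (g 0 / 2 + g 4) * r = 0 := by
      rw [g1] at e4
      linear_combination e4
    simpa [hr0] using this
  have g0 : g 0 = 0 := by
    rw [g1] at e3
    linear_combination e3 - (1 - r) * k
  have g4 : g 4 = 0 := by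
    rw [g0] at k
    simpa using k
  intro i
  fin_cases i
  · exact g0
  · exact g1
  · exact g2
  · exact e2
  · exact g4

lemma span_stab (r : ℕ) (X : Matrix (Fin (2 * r + 1)) (Fin (2 * r + 1)) ℂ)
    (hX : X ∈ stabAlg (corankOneA r) (corankOneB r)) :
    X ∈ Submodule.span ℂ {mC1 r, mC2 r, mX r, mY r, mZ r} := by
  obtain ⟨hA, hB⟩ := hX
  obtain ⟨a, b, hA⟩ := Submodule.mem_span_pair.1 hA
  obtain ⟨c, d, hB⟩ := Submodule.mem_span_pair.1 hB
  obtain ⟨x1, x2⟩ := cX r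
  obtain ⟨y1, y2⟩ := cY r
  obtain ⟨z1, z2⟩ := cd' r _ _ _ _ (fZ_eq r)
  obtain ⟨w1, w2⟩ := cd' r _ _ _ _ (fC2_eq r)
  obtain ⟨t, ht⟩ := key r (X - (b • mX r + c • mY r + ((a - d) / 2) • mZ r +
      ((a + d) / 2) • (mC2 r + (1 / 2 : ℂ) • mZ r)))
    (by
      simp only [map_sub, map_add, map_smul, x1, y1, z1, w1, ← hA]
      module)
    (by
      simp only [map_sub, map_add, map_smul, x2, y2, z2, w2, ← hB]
      module)
  have hE : mono (2 * r + 1) (fun p => if p < r then -1 else 1) id =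
      mC2 r - mC1 r + mZ r := by
    ext p q
    show (if _ then (if _ then _ else _) else _) =
      (if (q : ℕ) = id (p : ℕ) then fC2 r p else 0) - (if (q : ℕ) = id (p : ℕ) then fC1 r p else 0)
      + (if (q : ℕ) = id (p : ℕ) then fZ r p else 0)
    simp only [fC1, fC2, fZ]
    split_ifs <;> ring
  have hX : X = (b • mX r + c • mY r + ((a - d) / 2) • mZ r +
      ((a + d) / 2) • (mC2 r + (1 / 2 : ℂ) • mZ r)) + t • (mC2 r - mC1 r + mZ r) := by
    rw [← hE, ← ht]
    abel
  have m1 : mC1 r ∈ Submodule.span ℂ {mC1 r, mC2 r, mX r, mY r, mZ r} :=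
    Submodule.subset_span (by simp)
  have m2 : mC2 r ∈ Submodule.span ℂ {mC1 r, mC2 r, mX r, mY r, mZ r} :=
    Submodule.subset_span (by simp)
  have m3 : mX r ∈ Submodule.span ℂ {mC1 r, mC2 r, mX r, mY r, mZ r} :=
    Submodule.subset_span (by simp)
  have m4 : mY r ∈ Submodule.span ℂ {mC1 r, mC2 r, mX r, mY r, mZ r} :=
    Submodule.subset_span (by simp)
  have m5 : mZ r ∈ Submodule.span ℂ {mC1 r, mC2 r, mX r, mY r, mZ r} :=
    Submodule.subset_span (by simp)
  generalize Submodule.span ℂ {mC1 r, mC2 r, mX r, mY r, mZ r} = V at *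
  rw [hX]
  exact V.add_mem (V.add_mem (V.add_mem (V.add_mem (V.smul_mem _ m3) (V.smul_mem _ m4))
    (V.smul_mem _ m5)) (V.smul_mem _ (V.add_mem m2 (V.smul_mem _ m5))))
    (V.smul_mem _ (V.add_mem (V.sub_mem m2 m1) m5))

/-- The 5-dimensional Lie algebra of the stabilizer of the
corank-one canonical pencil is isomorphic to `𝔰𝔩₂ ⋉ ℂ²`: concretely, it admits a
ℂ-basis `C₁, C₂, 𝒳, 𝒴, 𝒵` satisfying the commutator relations `[C₁,C₂] = 0`,
`[𝒳,𝒴] = 𝒵`, `[𝒵,𝒳] = 2𝒳`, `[𝒵,𝒴] = −2𝒴`, `[C₁,𝒳] = 𝒳 = −[C₂,𝒳]`,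
`[C₁,𝒴] = −𝒴 = −[C₂,𝒴]`, `[C₁,𝒵] = [C₂,𝒵] = 0`. -/
theorem corankOne_stabilizer_sl2_semidirect (r : ℕ) (hr : 1 ≤ r) :
    ∃ C₁ C₂ 𝒳 𝒴 𝒵 : Matrix (Fin (2 * r + 1)) (Fin (2 * r + 1)) ℂ,
      C₁ ∈ stabAlg (corankOneA r) (corankOneB r) ∧
      C₂ ∈ stabAlg (corankOneA r) (corankOneB r) ∧
      𝒳 ∈ stabAlg (corankOneA r) (corankOneB r) ∧
      𝒴 ∈ stabAlg (corankOneA r) (corankOneB r) ∧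
      𝒵 ∈ stabAlg (corankOneA r) (corankOneB r) ∧
      LinearIndependent ℂ ![C₁, C₂, 𝒳, 𝒴, 𝒵] ∧
      Submodule.span ℂ {C₁, C₂, 𝒳, 𝒴, 𝒵} = stabAlg (corankOneA r) (corankOneB r) ∧
      C₁ * C₂ - C₂ * C₁ = 0 ∧
      𝒳 * 𝒴 - 𝒴 * 𝒳 = 𝒵 ∧
      𝒵 * 𝒳 - 𝒳 * 𝒵 = (2 : ℂ) • 𝒳 ∧
      𝒵 * 𝒴 - 𝒴 * 𝒵 = -((2 : ℂ) • 𝒴) ∧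
      C₁ * 𝒳 - 𝒳 * C₁ = 𝒳 ∧
      C₂ * 𝒳 - 𝒳 * C₂ = -𝒳 ∧
      C₁ * 𝒴 - 𝒴 * C₁ = -𝒴 ∧
      C₂ * 𝒴 - 𝒴 * C₂ = 𝒴 ∧
      C₁ * 𝒵 - 𝒵 * C₁ = 0 ∧
      C₂ * 𝒵 - 𝒵 * C₂ = 0 := by
  have hC1 := mem_stab (cd' r _ _ _ _ (fC1_eq r))
  have hC2 := mem_stab (cd' r _ _ _ _ (fC2_eq r))
  have hZ := mem_stab (cd' r _ _ _ _ (fZ_eq r))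
  have hX := mem_stab (cX r)
  have hY := mem_stab (cY r)
  obtain ⟨z1, z2⟩ := brd r _ _ _ _ (fZ_eq r)
  obtain ⟨c1, c2⟩ := brd r _ _ _ _ (fC1_eq r)
  obtain ⟨d1, d2⟩ := brd r _ _ _ _ (fC2_eq r)
  refine ⟨mC1 r, mC2 r, mX r, mY r, mZ r, hC1, hC2, hX, hY, hZ, lin_indep r hr, ?_,
    brD r _ _, brXY r, ?_, ?_, ?_, ?_, ?_, ?_, brD r _ _, brD r _ _⟩
  · apply le_antisymm
    · rw [Submodule.span_le]
      rintro x (rfl | rfl | rfl | rfl | rfl)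
      exacts [hC1, hC2, hX, hY, hZ]
    · exact fun x hx => span_stab r x hx
  · rw [z1]; module
  · rw [z2]; module
  · rw [c1]; module
  · rw [d1]; module
  · rw [c2]; module
  · rw [d2]; module
end

section
/- Let r₁ < r₂ be positive integers, r = r₁ + r₂, and let 𝒜, ℬ be the canonical matrices of size 2r+2 associated to the partition (r₁, r₂). Then the ℂ-vector space 𝔤(𝒜,ℬ) of complex (2r+2)×(2r+2) matrices X such that both Xᵀ𝒜 + 𝒜X and Xᵀℬ + ℬX lie in the ℂ-linear span of {𝒜, ℬ} has dimension 2r₂ + 7 over ℂ. -/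
open Matrix

/-- Index type of the canonical pencil associated to the partition `rr`:
pairs `(i, p)` with `i : Fin h` and `0 ≤ p ≤ 2 rᵢ`. -/
abbrev PencilIdx (h : ℕ) (rr : Fin h → ℕ) := (i : Fin h) × Fin (2 * rr i + 1)

/-- The first canonical matrix `𝒜` of the pencil `L_{(r₁,…,r_h)}`. -/
def canA (h : ℕ) (rr : Fin h → ℕ) : Matrix (PencilIdx h rr) (PencilIdx h rr) ℂ :=
  Matrix.of fun u v =>
    if u.1 = v.1 ∧
        (((v.2 : ℕ) = (u.2 : ℕ) + rr u.1 ∧ (u.2 : ℕ) < rr u.1) ∨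
         ((u.2 : ℕ) = (v.2 : ℕ) + rr u.1 ∧ (v.2 : ℕ) < rr u.1)) then 1 else 0

/-- The second canonical matrix `ℬ` of the pencil `L_{(r₁,…,r_h)}`. -/
def canB (h : ℕ) (rr : Fin h → ℕ) : Matrix (PencilIdx h rr) (PencilIdx h rr) ℂ :=
  Matrix.of fun u v =>
    if u.1 = v.1 ∧
        (((v.2 : ℕ) = (u.2 : ℕ) + rr u.1 + 1 ∧ (u.2 : ℕ) < rr u.1) ∨
         ((u.2 : ℕ) = (v.2 : ℕ) + rr u.1 + 1 ∧ (v.2 : ℕ) < rr u.1)) then 1 else 0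


/-- total index -/
def ixN {h : ℕ} (rr : Fin h → ℕ) (i : Fin h) (p : ℕ) : PencilIdx h rr :=
  ⟨i, Fin.ofNat (2 * rr i + 1) p⟩

lemma ixN_fst {h : ℕ} (rr : Fin h → ℕ) (i : Fin h) (p : ℕ) : (ixN rr i p).1 = i := rfl

lemma ixN_snd {h : ℕ} (rr : Fin h → ℕ) (i : Fin h) (p : ℕ) (hp : p ≤ 2 * rr i) :
    ((ixN rr i p).2 : ℕ) = p := by
  simp [ixN]
  omega

lemma ixN_ext {h : ℕ} (rr : Fin h → ℕ) (i : Fin h) (p : ℕ) (hp : p ≤ 2 * rr i)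
    (u : PencilIdx h rr) (h1 : u.1 = i) (h2 : (u.2 : ℕ) = p) : u = ixN rr i p := by
  obtain ⟨j, q⟩ := u
  subst h1
  simp only [ixN, Sigma.mk.injEq, heq_eq_eq, true_and]
  apply Fin.ext
  have := ixN_snd rr j p hp
  simp only [ixN] at this
  rw [this]; exact h2

lemma ixN_cases {h : ℕ} (rr : Fin h → ℕ) (u : PencilIdx h rr) :
    (∃ i p, p < rr i ∧ u = ixN rr i p) ∨ (∃ i p, p ≤ rr i ∧ u = ixN rr i (rr i + p)) := by
  obtain ⟨i, q⟩ := u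
  have hq := q.2
  by_cases hlt : (q : ℕ) < rr i
  · left
    exact ⟨i, q, hlt, ixN_ext rr i q (by omega) _ rfl rfl⟩
  · right
    exact ⟨i, q - rr i, by omega, ixN_ext rr i _ (by omega) _ rfl (by simp; omega)⟩

lemma can_one {P : Prop} [Decidable P] (hP : P) : (if P then (1:ℂ) else 0) = 1 := if_pos hP
lemma can_zero {P : Prop} [Decidable P] (hP : ¬ P) : (if P then (1:ℂ) else 0) = 0 := if_neg hP

section
variable {h : ℕ} (rr : Fin h → ℕ)

lemma mulRow (M X : Matrix (PencilIdx h rr) (PencilIdx h rr) ℂ) (u w v : PencilIdx h rr)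
    (hw : M u w = 1) (h0 : ∀ w', w' ≠ w → M u w' = 0) : (M * X) u v = X w v := by
  rw [Matrix.mul_apply, Finset.sum_eq_single w]
  · rw [hw, one_mul]
  · intro b _ hb
    rw [h0 b hb, zero_mul]
  · simp

lemma mulRow0 (M X : Matrix (PencilIdx h rr) (PencilIdx h rr) ℂ) (u v : PencilIdx h rr)
    (h0 : ∀ w', M u w' = 0) : (M * X) u v = 0 := by
  rw [Matrix.mul_apply]
  exact Finset.sum_eq_zero fun b _ => by rw [h0 b, zero_mul]

lemma A_e (X : Matrix (PencilIdx h rr) (PencilIdx h rr) ℂ) (i p v) (hp : p < rr i) :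
    (canA h rr * X) (ixN rr i p) v = X (ixN rr i (rr i + p)) v := by
  apply mulRow
  · apply can_one
    simp only [ixN_fst]
    rw [ixN_snd rr i p (by omega), ixN_snd rr i _ (by omega)]
    exact ⟨trivial, Or.inl ⟨by omega, hp⟩⟩
  · intro w hw
    apply can_zero
    simp only [ixN_fst]
    rw [ixN_snd rr i p (by omega)]
    rintro ⟨h1, h2⟩
    apply hw
    exact ixN_ext rr i _ (by omega) w h1.symm (by omega)

lemma A_f (X : Matrix (PencilIdx h rr) (PencilIdx h rr) ℂ) (i p v) (hp : p < rr i) :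
    (canA h rr * X) (ixN rr i (rr i + p)) v = X (ixN rr i p) v := by
  apply mulRow
  · apply can_one
    simp only [ixN_fst]
    rw [ixN_snd rr i p (by omega), ixN_snd rr i _ (by omega)]
    exact ⟨trivial, Or.inr ⟨by omega, hp⟩⟩
  · intro w hw
    apply can_zero
    simp only [ixN_fst]
    rw [ixN_snd rr i _ (by omega)]
    rintro ⟨h1, h2⟩
    apply hw
    exact ixN_ext rr i _ (by omega) w h1.symm (by omega)

lemma A_f0 (X : Matrix (PencilIdx h rr) (PencilIdx h rr) ℂ) (i v) :
    (canA h rr * X) (ixN rr i (rr i + rr i)) v = 0 := by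
  apply mulRow0
  intro w
  apply can_zero
  simp only [ixN_fst]
  rw [ixN_snd rr i _ (by omega)]
  rintro ⟨h1, h2⟩
  omega

lemma B_e (X : Matrix (PencilIdx h rr) (PencilIdx h rr) ℂ) (i p v) (hp : p < rr i) :
    (canB h rr * X) (ixN rr i p) v = X (ixN rr i (rr i + (p + 1))) v := by
  apply mulRow
  · apply can_one
    simp only [ixN_fst]
    rw [ixN_snd rr i p (by omega), ixN_snd rr i _ (by omega)]
    exact ⟨trivial, Or.inl ⟨by omega, hp⟩⟩
  · intro w hw
    apply can_zero
    simp only [ixN_fst]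
    rw [ixN_snd rr i p (by omega)]
    rintro ⟨h1, h2⟩
    apply hw
    exact ixN_ext rr i _ (by omega) w h1.symm (by omega)

lemma B_f (X : Matrix (PencilIdx h rr) (PencilIdx h rr) ℂ) (i p v) (hp : p < rr i) :
    (canB h rr * X) (ixN rr i (rr i + (p + 1))) v = X (ixN rr i p) v := by
  apply mulRow
  · apply can_one
    simp only [ixN_fst]
    rw [ixN_snd rr i p (by omega), ixN_snd rr i _ (by omega)]
    exact ⟨trivial, Or.inr ⟨by omega, hp⟩⟩
  · intro w hw
    apply can_zero
    simp only [ixN_fst]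
    rw [ixN_snd rr i _ (by omega)]
    rintro ⟨h1, h2⟩
    apply hw
    exact ixN_ext rr i _ (by omega) w h1.symm (by omega)

lemma B_f0 (X : Matrix (PencilIdx h rr) (PencilIdx h rr) ℂ) (i v) :
    (canB h rr * X) (ixN rr i (rr i + 0)) v = 0 := by
  apply mulRow0
  intro w
  apply can_zero
  simp only [ixN_fst]
  rw [ixN_snd rr i _ (by omega)]
  rintro ⟨h1, h2⟩
  omega

lemma canA_symm : (canA h rr)ᵀ = canA h rr := by
  ext u v
  simp only [Matrix.transpose_apply, canA, Matrix.of_apply]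
  by_cases e : u.1 = v.1
  · have : rr u.1 = rr v.1 := by rw [e]
    simp only [e, true_and]
    congr 1
    exact propext Or.comm
  · rw [if_neg (fun hh => e hh.1.symm), if_neg (fun hh => e hh.1)]

lemma canB_symm : (canB h rr)ᵀ = canB h rr := by
  ext u v
  simp only [Matrix.transpose_apply, canB, Matrix.of_apply]
  by_cases e : u.1 = v.1
  · have : rr u.1 = rr v.1 := by rw [e]
    simp only [e, true_and]
    congr 1
    exact propext Or.comm
  · rw [if_neg (fun hh => e hh.1.symm), if_neg (fun hh => e hh.1)]

lemma congrDeriv_apply' {n : Type*} [Fintype n] (M X : Matrix n n ℂ) (hM : Mᵀ = M) (u v : n) :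
    congrDeriv M X u v = (M * X) v u + (M * X) u v := by
  have : Xᵀ * M = (M * X)ᵀ := by rw [Matrix.transpose_mul, hM]
  show (Xᵀ * M + M * X) u v = _
  rw [this]; rfl

lemma mem_stab_s13 (X : Matrix (PencilIdx h rr) (PencilIdx h rr) ℂ) :
    X ∈ stabAlg (canA h rr) (canB h rr) ↔ ∃ a b c d : ℂ,
      (∀ u v, (canA h rr * X) v u + (canA h rr * X) u v = a * canA h rr u v + b * canB h rr u v) ∧
      (∀ u v, (canB h rr * X) v u + (canB h rr * X) u v
        = c * canA h rr u v + d * canB h rr u v) := by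
  simp only [stabAlg, Submodule.mem_inf, Submodule.mem_comap, Submodule.mem_span_pair]
  constructor
  · rintro ⟨⟨a, b, h1⟩, ⟨c, d, h2⟩⟩
    refine ⟨a, b, c, d, fun u v => ?_, fun u v => ?_⟩
    · rw [← congrDeriv_apply' _ _ (canA_symm rr), ← h1]; simp
    · rw [← congrDeriv_apply' _ _ (canB_symm rr), ← h2]; simp
  · rintro ⟨a, b, c, d, h1, h2⟩
    refine ⟨⟨a, b, ?_⟩, ⟨c, d, ?_⟩⟩
    · ext u v
      rw [congrDeriv_apply' _ _ (canA_symm rr), h1]; simp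
    · ext u v
      rw [congrDeriv_apply' _ _ (canB_symm rr), h2]; simp

lemma A_ee (i j p q) (hp : p < rr i) (hq : q < rr j) : canA h rr (ixN rr i p) (ixN rr j q) = 0 := by
  apply can_zero
  simp only [ixN_fst]
  rw [ixN_snd rr i p (by omega), ixN_snd rr j q (by omega)]
  rintro ⟨rfl, h2⟩; omega
lemma B_ee (i j p q) (hp : p < rr i) (hq : q < rr j) : canB h rr (ixN rr i p) (ixN rr j q) = 0 := by
  apply can_zero
  simp only [ixN_fst]
  rw [ixN_snd rr i p (by omega), ixN_snd rr j q (by omega)]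
  rintro ⟨rfl, h2⟩; omega
lemma A_ff (i j p q) (hp : p ≤ rr i) (hq : q ≤ rr j) :
    canA h rr (ixN rr i (rr i + p)) (ixN rr j (rr j + q)) = 0 := by
  apply can_zero
  simp only [ixN_fst]
  rw [ixN_snd rr i _ (by omega), ixN_snd rr j _ (by omega)]
  rintro ⟨rfl, h2⟩; omega
lemma B_ff (i j p q) (hp : p ≤ rr i) (hq : q ≤ rr j) :
    canB h rr (ixN rr i (rr i + p)) (ixN rr j (rr j + q)) = 0 := by
  apply can_zero
  simp only [ixN_fst]
  rw [ixN_snd rr i _ (by omega), ixN_snd rr j _ (by omega)]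
  rintro ⟨rfl, h2⟩; omega
lemma A_ef (i j p q) (hp : p < rr i) (hq : q ≤ rr j) :
    canA h rr (ixN rr i p) (ixN rr j (rr j + q)) = if i = j ∧ q = p then 1 else 0 := by
  refine if_congr ?_ rfl rfl
  simp only [ixN_fst]
  rw [ixN_snd rr i _ (by omega), ixN_snd rr j _ (by omega)]
  refine and_congr_right ?_
  rintro rfl; omega
lemma B_ef (i j p q) (hp : p < rr i) (hq : q ≤ rr j) :
    canB h rr (ixN rr i p) (ixN rr j (rr j + q)) = if i = j ∧ q = p + 1 then 1 else 0 := by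
  refine if_congr ?_ rfl rfl
  simp only [ixN_fst]
  rw [ixN_snd rr i _ (by omega), ixN_snd rr j _ (by omega)]
  refine and_congr_right ?_
  rintro rfl; omega
end

lemma toep (m n : ℕ) (D : ℕ → ℕ → ℂ) (h1 : ∀ p < m, D (p + 1) 0 = 0) (h2 : ∀ p < m, D p n = 0)
    (h3 : ∀ p < m, ∀ q < n, D p q = D (p + 1) (q + 1)) (h4 : ∀ k, k + m ≤ n → D 0 k = 0) :
    ∀ p ≤ m, ∀ q ≤ n, D p q = 0 := by
  have key : ∀ s p q, p + s ≤ m → q + s ≤ n → D p q = D (p + s) (q + s) := by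
    intro s
    induction s with
    | zero => intros; rfl
    | succ s ih =>
      intro p q hp hq
      rw [ih p q (by omega) (by omega), h3 _ (by omega) _ (by omega)]; rfl
  intro p hp q hq
  by_cases hpq : q < p
  · have := key q (p - q) 0 (by omega) (by omega)
    rw [show p - q + q = p by omega, zero_add] at this
    rw [← this, show p - q = p - q - 1 + 1 by omega]
    exact h1 _ (by omega)
  · have := key p 0 (q - p) (by omega) (by omega)
    rw [show q - p + p = q by omega, zero_add] at this
    rw [← this]
    by_cases hk : q - p + m ≤ n
    · exact h4 _ hk
    · have := key (n - (q - p)) 0 (q - p) (by omega) (by omega)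
      rw [this, show q - p + (n - (q - p)) = n by omega]
      exact h2 _ (by omega)

lemma gzero (m n : ℕ) (G K : ℕ → ℕ → ℂ)
    (a1 : ∀ p < m, ∀ q < n, K q p + G p q = 0) (a2 : ∀ p < m, G p n = 0)
    (a3 : ∀ q < n, K q m = 0) (b1 : ∀ p < m, ∀ q < n, K q (p + 1) + G p (q + 1) = 0)
    (b2 : ∀ p < m, G p 0 = 0) : ∀ q ≤ n, ∀ p < m, G p q = 0 := by
  intro q
  induction q with
  | zero => intro _ p hp; exact b2 p hp
  | succ q ih =>
    intro hq p hp
    have e1 := b1 p hp q (by omega)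
    have e2 : K q (p + 1) = 0 := by
      by_cases hpm : p + 1 < m
      · have := a1 (p + 1) hpm q (by omega)
        rwa [ih (by omega) _ hpm, add_zero] at this
      · rw [show p + 1 = m by omega]; exact a3 q (by omega)
    rwa [e2, zero_add] at e1

lemma hank (m n : ℕ) (H K : ℕ → ℕ → ℂ)
    (a1 : ∀ p < m, ∀ q < n, K q p + H p q = 0)
    (b1 : ∀ p < m, ∀ q < n, K (q + 1) p + H (p + 1) q = 0) :
    ∀ s p q, p + s ≤ m → q + s < n → H p (q + s) = H (p + s) q := by
  intro s
  induction s with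
  | zero => intros; rfl
  | succ s ih =>
    intro p q hp hq
    have e1 := a1 p (by omega) (q + s + 1) (by omega)
    have e2 := b1 p (by omega) (q + s) (by omega)
    have e3 := ih (p + 1) q (by omega) (by omega)
    rw [show p + (s + 1) = p + 1 + s by omega, ← e3, ← add_assoc]
    linear_combination e1 - e2

lemma hank_diag (m : ℕ) (H : ℕ → ℕ → ℂ)
    (a1 : ∀ p < m, ∀ q < m, H q p + H p q = 0)
    (b1 : ∀ p < m, ∀ q < m, H (q + 1) p + H (p + 1) q = 0) :
    ∀ p ≤ m, ∀ q < m, H p q = 0 := by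
  have hk := hank m m H H a1 b1
  have k1 : ∀ p q, p ≤ q → q < m → H p q = 0 := by
    intro p q hpq hq
    have e1 := hk (q - p) p p (by omega) (by omega)
    rw [show p + (q - p) = q by omega] at e1
    have e2 := a1 p (by omega) q hq
    rw [← e1] at e2
    linear_combination e2 / 2
  have k2 : ∀ p < m, ∀ q < m, H p q = 0 := by
    intro p hp q hq
    by_cases hpq : p ≤ q
    · exact k1 p q hpq hq
    · have := a1 p hp q hq
      rwa [k1 q p (by omega) hp, zero_add] at this
  intro p hp q hq
  by_cases hpm : p < m
  · exact k2 p hpm q hq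
  · obtain rfl : p = m := by omega
    obtain ⟨t, rfl⟩ : ∃ t, p = t + 1 := ⟨p - 1, by omega⟩
    have e := b1 t (by omega) q hq
    by_cases hqt : q = t
    · subst hqt; linear_combination e / 2
    · rwa [k2 (q + 1) (by omega) t (by omega), zero_add] at e

lemma hank_off (m n : ℕ) (hn : 1 ≤ n) (H K : ℕ → ℕ → ℂ)
    (a1 : ∀ p < m, ∀ q < n, K q p + H p q = 0)
    (b1 : ∀ p < m, ∀ q < n, K (q + 1) p + H (p + 1) q = 0)
    (z : ∀ p ≤ m, ∀ q < n, (p = m ∨ q = 0) → H p q = 0) :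
    (∀ p ≤ m, ∀ q < n, H p q = 0) ∧ (∀ q ≤ n, ∀ p < m, K q p = 0) := by
  have hk := hank m n H K a1 b1
  have hH : ∀ p ≤ m, ∀ q < n, H p q = 0 := by
    intro p hp q hq
    by_cases hpq : p + q ≤ m
    · have := hk q p 0 hpq (by omega)
      rw [zero_add] at this
      rw [this]
      exact z _ hpq _ (by omega) (Or.inr rfl)
    · have := hk (m - p) p (q - (m - p)) (by omega) (by omega)
      rw [show q - (m - p) + (m - p) = q by omega] at this
      rw [this]
      exact z _ (by omega) _ (by omega) (Or.inl (by omega))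
  refine ⟨hH, ?_⟩
  intro q hq p hp
  rcases Nat.eq_zero_or_pos q with rfl | hq0
  · have := a1 p hp 0 hn
    rwa [hH p (by omega) 0 hn, add_zero] at this
  · obtain ⟨t, rfl⟩ : ∃ t, q = t + 1 := ⟨q - 1, by omega⟩
    have := b1 p hp t (by omega)
    rwa [hH (p + 1) (by omega) t (by omega), add_zero] at this

lemma hom_zero (rr : Fin 2 → ℕ) (h0 : 1 ≤ rr 0)
    (X : Matrix (PencilIdx 2 rr) (PencilIdx 2 rr) ℂ)
    (hA : ∀ u v, (canA 2 rr * X) v u + (canA 2 rr * X) u v = 0)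
    (hB : ∀ u v, (canB 2 rr * X) v u + (canB 2 rr * X) u v = 0)
    (hs : ∀ i j k, k + rr i ≤ rr j → X (ixN rr i (rr i + 0)) (ixN rr j (rr j + k)) = 0)
    (hh : ∀ p ≤ rr 1, ∀ q < rr 0, (p = rr 1 ∨ q = 0) →
      X (ixN rr 1 (rr 1 + p)) (ixN rr 0 q) = 0) : X = 0 := by
  have hD : ∀ i j, ∀ p ≤ rr i, ∀ q ≤ rr j, X (ixN rr i (rr i + p)) (ixN rr j (rr j + q)) = 0 := by
    intro i j
    apply toep (rr i) (rr j) (fun p q => X (ixN rr i (rr i + p)) (ixN rr j (rr j + q)))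
    · intro p hp
      have := hB (ixN rr i p) (ixN rr j (rr j + 0))
      rwa [B_f0, B_e _ _ _ _ _ hp, zero_add] at this
    · intro p hp
      have := hA (ixN rr i p) (ixN rr j (rr j + rr j))
      rwa [A_f0, A_e _ _ _ _ _ hp, zero_add] at this
    · intro p hp q hq
      have e1 := hA (ixN rr i p) (ixN rr j (rr j + q))
      have e2 := hB (ixN rr i p) (ixN rr j (rr j + (q + 1)))
      rw [A_f _ _ _ _ _ hq, A_e _ _ _ _ _ hp] at e1
      rw [B_f _ _ _ _ _ hq, B_e _ _ _ _ _ hp] at e2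
      show X (ixN rr i (rr i + p)) (ixN rr j (rr j + q)) =
        X (ixN rr i (rr i + (p + 1))) (ixN rr j (rr j + (q + 1)))
      linear_combination e1 - e2
    · intro k hk
      exact hs i j k hk
  have hE : ∀ i j, ∀ p < rr i, ∀ q < rr j, X (ixN rr i p) (ixN rr j q) = 0 := by
    intro i j p hp q hq
    have e1 := hA (ixN rr j q) (ixN rr i (rr i + p))
    rwa [A_f _ _ _ _ _ hp, A_e _ _ _ _ _ hq, hD j i q hq.le p hp.le, add_zero] at e1
  have hG : ∀ i j, ∀ q ≤ rr j, ∀ p < rr i, X (ixN rr i p) (ixN rr j (rr j + q)) = 0 := by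
    intro i j
    apply gzero (rr i) (rr j) (fun p q => X (ixN rr i p) (ixN rr j (rr j + q)))
      (fun p q => X (ixN rr j p) (ixN rr i (rr i + q)))
    · intro p hp q hq
      have := hA (ixN rr i (rr i + p)) (ixN rr j (rr j + q))
      rwa [A_f _ _ _ _ _ hp, A_f _ _ _ _ _ hq] at this
    · intro p hp
      have := hA (ixN rr i (rr i + p)) (ixN rr j (rr j + rr j))
      rwa [A_f _ _ _ _ _ hp, A_f0, zero_add] at this
    · intro p hp
      have := hA (ixN rr j (rr j + p)) (ixN rr i (rr i + rr i))
      rwa [A_f _ _ _ _ _ hp, A_f0, zero_add] at this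
    · intro p hp q hq
      have := hB (ixN rr i (rr i + (p + 1))) (ixN rr j (rr j + (q + 1)))
      rwa [B_f _ _ _ _ _ hp, B_f _ _ _ _ _ hq] at this
    · intro p hp
      have := hB (ixN rr i (rr i + (p + 1))) (ixN rr j (rr j + 0))
      rwa [B_f _ _ _ _ _ hp, B_f0, zero_add] at this
  have c1 : ∀ i j, ∀ p < rr i, ∀ q < rr j, X (ixN rr j (rr j + q)) (ixN rr i p)
      + X (ixN rr i (rr i + p)) (ixN rr j q) = 0 := by
    intro i j p hp q hq
    have := hA (ixN rr i p) (ixN rr j q)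
    rwa [A_e _ _ _ _ _ hp, A_e _ _ _ _ _ hq] at this
  have c2 : ∀ i j, ∀ p < rr i, ∀ q < rr j, X (ixN rr j (rr j + (q + 1))) (ixN rr i p)
      + X (ixN rr i (rr i + (p + 1))) (ixN rr j q) = 0 := by
    intro i j p hp q hq
    have := hB (ixN rr i p) (ixN rr j q)
    rwa [B_e _ _ _ _ _ hp, B_e _ _ _ _ _ hq] at this
  have hoff := hank_off (rr 1) (rr 0) h0
    (fun p q => X (ixN rr 1 (rr 1 + p)) (ixN rr 0 q))
    (fun p q => X (ixN rr 0 (rr 0 + p)) (ixN rr 1 q)) (c1 1 0) (c2 1 0) hh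
  have hdg : ∀ i, ∀ p ≤ rr i, ∀ q < rr i, X (ixN rr i (rr i + p)) (ixN rr i q) = 0 := fun i =>
    hank_diag (rr i) (fun p q => X (ixN rr i (rr i + p)) (ixN rr i q)) (c1 i i) (c2 i i)
  have hH : ∀ i j, ∀ p ≤ rr i, ∀ q < rr j, X (ixN rr i (rr i + p)) (ixN rr j q) = 0 := by
    intro i j
    match i, j with
    | 0, 0 => exact hdg 0
    | 0, 1 => exact hoff.2
    | 1, 0 => exact hoff.1
    | 1, 1 => exact hdg 1
  ext u v
  rw [Matrix.zero_apply]
  rcases ixN_cases rr u with ⟨i, p, hp, rfl⟩ | ⟨i, p, hp, rfl⟩ <;>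
  rcases ixN_cases rr v with ⟨j, q, hq, rfl⟩ | ⟨j, q, hq, rfl⟩
  · exact hE i j p hp q hq
  · exact hG i j q hq p hp
  · exact hH i j p hp q hq
  · exact hD i j p hp q hq

/-- matrix from blocks -/
def mkX (rr : Fin 2 → ℕ) (E D H : Fin 2 → Fin 2 → ℕ → ℕ → ℂ) :
    Matrix (PencilIdx 2 rr) (PencilIdx 2 rr) ℂ :=
  Matrix.of fun u v =>
    if (u.2 : ℕ) < rr u.1 then
      (if (v.2 : ℕ) < rr v.1 then E u.1 v.1 u.2 v.2 else 0)
    else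
      (if (v.2 : ℕ) < rr v.1 then H u.1 v.1 (u.2 - rr u.1) v.2
        else D u.1 v.1 (u.2 - rr u.1) (v.2 - rr v.1))

section
variable (rr : Fin 2 → ℕ) (E D H : Fin 2 → Fin 2 → ℕ → ℕ → ℂ)

lemma mk_ee (i j p q) (hp : p < rr i) (hq : q < rr j) :
    mkX rr E D H (ixN rr i p) (ixN rr j q) = E i j p q := by
  have e1 := ixN_snd rr i p (by omega)
  have e2 := ixN_snd rr j q (by omega)
  unfold mkX
  rw [Matrix.of_apply, e1, e2, if_pos (by exact hp), if_pos (by exact hq)]; rfl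

lemma mk_ef (i j p q) (hp : p < rr i) (hq : q ≤ rr j) :
    mkX rr E D H (ixN rr i p) (ixN rr j (rr j + q)) = 0 := by
  have e1 := ixN_snd rr i p (by omega)
  have e2 := ixN_snd rr j (rr j + q) (by omega)
  unfold mkX
  rw [Matrix.of_apply, e1, e2, if_pos (by exact hp), if_neg (by rw [ixN_fst]; omega)]

lemma mk_fe (i j p q) (hp : p ≤ rr i) (hq : q < rr j) :
    mkX rr E D H (ixN rr i (rr i + p)) (ixN rr j q) = H i j p q := by
  have e1 := ixN_snd rr i (rr i + p) (by omega)
  have e2 := ixN_snd rr j q (by omega)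
  unfold mkX
  rw [Matrix.of_apply, e1, e2, if_neg (by rw [ixN_fst]; omega), if_pos (by exact hq), ixN_fst,
    ixN_fst, Nat.add_sub_cancel_left]

lemma mk_ff (i j p q) (hp : p ≤ rr i) (hq : q ≤ rr j) :
    mkX rr E D H (ixN rr i (rr i + p)) (ixN rr j (rr j + q)) = D i j p q := by
  have e1 := ixN_snd rr i (rr i + p) (by omega)
  have e2 := ixN_snd rr j (rr j + q) (by omega)
  unfold mkX
  rw [Matrix.of_apply, e1, e2, if_neg (by rw [ixN_fst]; omega), if_neg (by rw [ixN_fst]; omega),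
    ixN_fst, ixN_fst, Nat.add_sub_cancel_left, Nat.add_sub_cancel_left]

lemma mk_mem (a b c d : ℂ)
    (a1 : ∀ i j, ∀ p < rr i, ∀ q < rr j, H j i q p + H i j p q = 0)
    (b1 : ∀ i j, ∀ p < rr i, ∀ q < rr j, H j i (q + 1) p + H i j (p + 1) q = 0)
    (a2 : ∀ i j, ∀ p < rr i, ∀ q < rr j, E j i q p + D i j p q =
      a * (if i = j ∧ q = p then 1 else 0) + b * (if i = j ∧ q = p + 1 then 1 else 0))
    (a3 : ∀ i j, ∀ p < rr i, D i j p (rr j) =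
      a * (if i = j ∧ rr j = p then 1 else 0) + b * (if i = j ∧ rr j = p + 1 then 1 else 0))
    (b2 : ∀ i j, ∀ p < rr i, ∀ q < rr j, E j i q p + D i j (p + 1) (q + 1) =
      c * (if i = j ∧ q + 1 = p then 1 else 0) + d * (if i = j ∧ q + 1 = p + 1 then 1 else 0))
    (b3 : ∀ i j, ∀ p < rr i, D i j (p + 1) 0 =
      c * (if i = j ∧ 0 = p then 1 else 0) + d * (if i = j ∧ 0 = p + 1 then 1 else 0)) :
    mkX rr E D H ∈ stabAlg (canA 2 rr) (canB 2 rr) := by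
  rw [mem_stab_s13]
  refine ⟨a, b, c, d, ?_, ?_⟩
  · have key : ∀ i j, ∀ p < rr i, ∀ q ≤ rr j,
        (canA 2 rr * mkX rr E D H) (ixN rr j (rr j + q)) (ixN rr i p) +
        (canA 2 rr * mkX rr E D H) (ixN rr i p) (ixN rr j (rr j + q)) =
        a * canA 2 rr (ixN rr i p) (ixN rr j (rr j + q)) +
        b * canB 2 rr (ixN rr i p) (ixN rr j (rr j + q)) := by
      intro i j p hp q hq
      rw [A_ef _ _ _ _ _ hp hq, B_ef _ _ _ _ _ hp hq, A_e _ _ _ _ _ hp, mk_ff _ _ _ _ _ _ _ _ hp.le hq]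
      rcases hq.lt_or_eq with hq' | rfl
      · rw [A_f _ _ _ _ _ hq', mk_ee _ _ _ _ _ _ _ _ hq' hp]
        exact a2 i j p hp q hq'
      · rw [A_f0, zero_add]
        exact a3 i j p hp
    intro u v
    rcases ixN_cases rr u with ⟨i, p, hp, rfl⟩ | ⟨i, p, hp, rfl⟩ <;>
    rcases ixN_cases rr v with ⟨j, q, hq, rfl⟩ | ⟨j, q, hq, rfl⟩
    · rw [A_ee _ _ _ _ _ hp hq, B_ee _ _ _ _ _ hp hq, A_e _ _ _ _ _ hp, A_e _ _ _ _ _ hq,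
        mk_fe _ _ _ _ _ _ _ _ hp.le hq, mk_fe _ _ _ _ _ _ _ _ hq.le hp, a1 i j p hp q hq]
      ring
    · exact key i j p hp q hq
    · have := key j i q hq p hp
      rw [← canA_symm, ← canB_symm, Matrix.transpose_apply, Matrix.transpose_apply, ← this,
        canA_symm, add_comm]
    · rw [A_ff _ _ _ _ _ hp hq, B_ff _ _ _ _ _ hp hq]
      have z : ∀ i j p q, p ≤ rr i → q ≤ rr j →
          (canA 2 rr * mkX rr E D H) (ixN rr i (rr i + p)) (ixN rr j (rr j + q)) = 0 := by
        intro i j p q hp hq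
        rcases hp.lt_or_eq with hp' | rfl
        · rw [A_f _ _ _ _ _ hp', mk_ef _ _ _ _ _ _ _ _ hp' hq]
        · rw [A_f0]
      rw [z _ _ _ _ hp hq, z _ _ _ _ hq hp]
      ring
  · have key : ∀ i j, ∀ p < rr i, ∀ q ≤ rr j,
        (canB 2 rr * mkX rr E D H) (ixN rr j (rr j + q)) (ixN rr i p) +
        (canB 2 rr * mkX rr E D H) (ixN rr i p) (ixN rr j (rr j + q)) =
        c * canA 2 rr (ixN rr i p) (ixN rr j (rr j + q)) +
        d * canB 2 rr (ixN rr i p) (ixN rr j (rr j + q)) := by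
      intro i j p hp q hq
      rw [A_ef _ _ _ _ _ hp hq, B_ef _ _ _ _ _ hp hq, B_e _ _ _ _ _ hp,
        mk_ff _ _ _ _ _ _ _ _ (by omega) hq]
      rcases q with _ | q
      · rw [B_f0, zero_add]
        exact b3 i j p hp
      · rw [B_f _ _ _ _ _ hq, mk_ee _ _ _ _ _ _ _ _ hq hp]
        exact b2 i j p hp q hq
    intro u v
    rcases ixN_cases rr u with ⟨i, p, hp, rfl⟩ | ⟨i, p, hp, rfl⟩ <;>
    rcases ixN_cases rr v with ⟨j, q, hq, rfl⟩ | ⟨j, q, hq, rfl⟩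
    · rw [A_ee _ _ _ _ _ hp hq, B_ee _ _ _ _ _ hp hq, B_e _ _ _ _ _ hp, B_e _ _ _ _ _ hq,
        mk_fe _ _ _ _ _ _ _ _ hp hq, mk_fe _ _ _ _ _ _ _ _ hq hp, b1 i j p hp q hq]
      ring
    · exact key i j p hp q hq
    · have := key j i q hq p hp
      rw [← canA_symm, ← canB_symm, Matrix.transpose_apply, Matrix.transpose_apply, ← this,
        canB_symm, add_comm]
    · rw [A_ff _ _ _ _ _ hp hq, B_ff _ _ _ _ _ hp hq]
      have z : ∀ i j p q, p ≤ rr i → q ≤ rr j →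
          (canB 2 rr * mkX rr E D H) (ixN rr i (rr i + p)) (ixN rr j (rr j + q)) = 0 := by
        intro i j p q hp hq
        rcases p with _ | p
        · rw [B_f0]
        · rw [B_f _ _ _ _ _ hp, mk_ef _ _ _ _ _ _ _ _ hp hq]
      rw [z _ _ _ _ hp hq, z _ _ _ _ hq hp]
      ring
end

/-- blocks -/
def Hc (hf : ℕ → ℂ) (i j : Fin 2) (p q : ℕ) : ℂ :=
  if i = j then 0 else if i = 1 then hf (p + q) else - hf (p + q)

def Dc (rr : Fin 2 → ℕ) (a b c d : ℂ) (s : Fin 2 → ℂ) (t : ℕ → ℂ) (i j : Fin 2) (p q : ℕ) : ℂ :=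
  if i = j then (if p = q then s i + p * (d - a) else if q = p + 1 then (rr i - p) * b
    else if p = q + 1 then p * c else 0)
  else if i = 0 then (if p ≤ q ∧ q - p ≤ rr 1 - rr 0 then t (q - p) else 0) else 0

def Ec (rr : Fin 2 → ℕ) (a b c d : ℂ) (s : Fin 2 → ℂ) (t : ℕ → ℂ) (i j : Fin 2) (p q : ℕ) : ℂ :=
  if i = j then (if p = q then a - s i - p * (d - a) else if p = q + 1 then - ((rr i - p) * b)
    else if q = p + 1 then - (q * c) else 0)
  else if j = 0 then (if q ≤ p ∧ p - q ≤ rr 1 - rr 0 then - t (p - q) else 0) else 0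

lemma c_mem (rr : Fin 2 → ℕ) (h01 : rr 0 < rr 1) (a b c d : ℂ) (s : Fin 2 → ℂ) (t hf : ℕ → ℂ) :
    mkX rr (Ec rr a b c d s t) (Dc rr a b c d s t) (Hc hf) ∈ stabAlg (canA 2 rr) (canB 2 rr) := by
  apply mk_mem rr _ _ _ a b c d
  · intro i j p hp q hq
    fin_cases i <;> fin_cases j <;> simp [Hc, add_comm]
  · intro i j p hp q hq
    fin_cases i <;> fin_cases j <;> simp [Hc, add_comm, add_left_comm]
  · intro i j p hp q hq
    by_cases hij : i = j
    · subst hij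
      simp only [Ec, Dc, true_and, if_true]
      rcases eq_or_ne q p with rfl | h1
      · simp
      · rcases eq_or_ne q (p + 1) with rfl | h2
        · simp; ring
        · rcases eq_or_ne p (q + 1) with rfl | h3
          · simp [h1, h2]
          · simp [h1, h2, h3, h1.symm]
    · simp only [Ec, Dc, hij, Ne.symm hij, false_and, if_false]
      by_cases hi : i = 0
      · simp only [hi, if_true]; split_ifs <;> simp
      · simp [hi]
  · intro i j p hp
    by_cases hij : i = j
    · subst hij
      simp only [Dc, true_and, if_true]
      rcases eq_or_ne (rr i) (p + 1) with h2 | h2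
      · simp [h2]
      · have e1 : rr i ≠ p := by omega
        have e2 : p ≠ rr i + 1 := by omega
        simp [h2, e1, e1.symm, e2]
    · simp only [Dc, hij, false_and, if_false]
      by_cases hi : i = 0
      · have hj : j = 1 := by omega
        subst hi hj
        rw [if_pos rfl, if_neg (by omega)]; simp
      · simp [hi]
  · intro i j p hp q hq
    by_cases hij : i = j
    · subst hij
      simp only [Ec, Dc, true_and, if_true]
      rcases eq_or_ne q p with rfl | h1
      · simp; ring
      · rcases eq_or_ne q (p + 1) with rfl | h2
        · simp
          intro hh; omega
        · rcases eq_or_ne p (q + 1) with rfl | h3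
          · simp
            rw [if_neg (by omega)]; ring
          · simp [h1, h2, h3, h1.symm, h3.symm]
    · simp only [Ec, Dc, hij, Ne.symm hij, false_and, if_false]
      by_cases hi : i = 0
      · simp only [hi, if_true, Nat.add_sub_add_right, Nat.add_le_add_iff_right]; split_ifs <;> simp
      · simp [hi]
  · intro i j p hp
    by_cases hij : i = j
    · subst hij
      simp only [Dc, true_and, if_true]
      rcases eq_or_ne p 0 with rfl | h2
      · simp
      · simp [h2, h2.symm]
    · simp [Dc, hij]

/-- coordinates -/
noncomputable def coord (rr : Fin 2 → ℕ) : Matrix (PencilIdx 2 rr) (PencilIdx 2 rr) ℂ →ₗ[ℂ]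
    (Fin 6 → ℂ) × (Fin (rr 1 - rr 0 + 1) → ℂ) × (Fin (rr 0 + rr 1) → ℂ) where
  toFun X := (![X (ixN rr 0 0) (ixN rr 0 0) + X (ixN rr 0 (rr 0 + 0)) (ixN rr 0 (rr 0 + 0)),
      X (ixN rr 0 (rr 0 + (rr 0 - 1))) (ixN rr 0 (rr 0 + rr 0)),
      X (ixN rr 0 (rr 0 + (0 + 1))) (ixN rr 0 (rr 0 + 0)),
      X (ixN rr 0 0) (ixN rr 0 0) + X (ixN rr 0 (rr 0 + (0 + 1))) (ixN rr 0 (rr 0 + (0 + 1))),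
      X (ixN rr 0 (rr 0 + 0)) (ixN rr 0 (rr 0 + 0)),
      X (ixN rr 1 (rr 1 + 0)) (ixN rr 1 (rr 1 + 0))],
    fun k => X (ixN rr 0 (rr 0 + 0)) (ixN rr 1 (rr 1 + k)),
    fun k => X (ixN rr 1 (rr 1 + min (k : ℕ) (rr 1))) (ixN rr 0 (k - min (k : ℕ) (rr 1))))
  map_add' X Y := by
    refine Prod.ext ?_ (Prod.ext ?_ ?_)
    · ext k; fin_cases k <;> simp <;> ring
    · ext k; simp
    · ext k; simp
  map_smul' c X := by
    refine Prod.ext ?_ (Prod.ext ?_ ?_)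
    · ext k; fin_cases k <;> simp <;> ring
    · ext k; simp
    · ext k; simp

lemma coord_inj (rr : Fin 2 → ℕ) (h0 : 1 ≤ rr 0) (h01 : rr 0 < rr 1)
    (X : Matrix (PencilIdx 2 rr) (PencilIdx 2 rr) ℂ)
    (hX : X ∈ stabAlg (canA 2 rr) (canB 2 rr)) (hc : coord rr X = 0) : X = 0 := by
  have hc1 := congrArg Prod.fst hc
  have hc2 := congrArg (fun z => z.2.1) hc
  have hc3 := congrArg (fun z => z.2.2) hc
  have k0 : X (ixN rr 0 0) (ixN rr 0 0) + X (ixN rr 0 (rr 0 + 0)) (ixN rr 0 (rr 0 + 0)) = 0 :=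
    congrFun hc1 0
  have k1 : X (ixN rr 0 (rr 0 + (rr 0 - 1))) (ixN rr 0 (rr 0 + rr 0)) = 0 := congrFun hc1 1
  have k2 : X (ixN rr 0 (rr 0 + (0 + 1))) (ixN rr 0 (rr 0 + 0)) = 0 := congrFun hc1 2
  have k3 : X (ixN rr 0 0) (ixN rr 0 0) +
    X (ixN rr 0 (rr 0 + (0 + 1))) (ixN rr 0 (rr 0 + (0 + 1))) = 0 := congrFun hc1 3
  have k4 : X (ixN rr 0 (rr 0 + 0)) (ixN rr 0 (rr 0 + 0)) = 0 := congrFun hc1 4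
  have k5 : X (ixN rr 1 (rr 1 + 0)) (ixN rr 1 (rr 1 + 0)) = 0 := congrFun hc1 5
  rw [mem_stab_s13] at hX
  obtain ⟨a, b, c, d, hA, hB⟩ := hX
  have ha : a = 0 := by
    have := hA (ixN rr 0 0) (ixN rr 0 (rr 0 + 0))
    rw [A_f _ _ _ _ _ h0, A_e _ _ _ _ _ h0, A_ef _ _ _ _ _ h0 (by omega),
      B_ef _ _ _ _ _ h0 (by omega), k0] at this
    simpa using this.symm
  have hb : b = 0 := by
    have := hA (ixN rr 0 (rr 0 - 1)) (ixN rr 0 (rr 0 + rr 0))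
    rw [A_f0, A_e _ _ _ _ _ (by omega), A_ef _ _ _ _ _ (by omega) le_rfl,
      B_ef _ _ _ _ _ (by omega) le_rfl, k1, if_neg (by omega), if_pos (by omega)] at this
    simpa using this.symm
  have hc : c = 0 := by
    have := hB (ixN rr 0 0) (ixN rr 0 (rr 0 + 0))
    rw [B_f0, B_e _ _ _ _ _ h0, A_ef _ _ _ _ _ h0 (by omega),
      B_ef _ _ _ _ _ h0 (by omega), k2] at this
    simpa using this.symm
  have hd : d = 0 := by
    have := hB (ixN rr 0 0) (ixN rr 0 (rr 0 + (0 + 1)))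
    rw [B_f _ _ _ _ _ h0, B_e _ _ _ _ _ h0, A_ef _ _ _ _ _ h0 (by omega),
      B_ef _ _ _ _ _ h0 (by omega), k3] at this
    simpa using this.symm
  subst ha hb hc hd
  simp only [zero_mul, add_zero] at hA hB
  apply hom_zero rr h0 X hA hB
  · intro i j k hk
    match i, j with
    | 0, 0 => rw [show k = 0 by omega]; exact k4
    | 0, 1 => exact congrFun hc2 ⟨k, by omega⟩
    | 1, 0 => omega
    | 1, 1 => rw [show k = 0 by omega]; exact k5
  · intro p hp q hq hpq
    have : X (ixN rr 1 (rr 1 + min (p + q) (rr 1))) (ixN rr 0 (p + q - min (p + q) (rr 1))) = 0 :=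
      congrFun hc3 ⟨p + q, by omega⟩
    rwa [show min (p + q) (rr 1) = p by omega, Nat.add_sub_cancel_left] at this

lemma coord_surj (rr : Fin 2 → ℕ) (h0 : 1 ≤ rr 0) (h01 : rr 0 < rr 1)
    (y : (Fin 6 → ℂ) × (Fin (rr 1 - rr 0 + 1) → ℂ) × (Fin (rr 0 + rr 1) → ℂ)) :
    ∃ X ∈ stabAlg (canA 2 rr) (canB 2 rr), coord rr X = y := by
  obtain ⟨y, t, hf⟩ := y
  refine ⟨_, c_mem rr h01 (y 0) (y 1) (y 2) (y 3) ![y 4, y 5]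
    (fun k => if hk : k < rr 1 - rr 0 + 1 then t ⟨k, hk⟩ else 0)
    (fun k => if hk : k < rr 0 + rr 1 then hf ⟨k, hk⟩ else 0), ?_⟩
  refine Prod.ext ?_ (Prod.ext ?_ ?_)
  · ext k
    simp only [coord, LinearMap.coe_mk, AddHom.coe_mk]
    rw [mk_ee _ _ _ _ _ _ _ _ h0 h0, mk_ff _ _ _ _ _ _ _ _ (by omega) (by omega),
      mk_ff _ _ _ _ _ _ _ _ (by omega) (by omega), mk_ff _ _ _ _ _ _ _ _ (by omega) (by omega),
      mk_ff _ _ _ _ _ _ _ _ (by omega) (by omega), mk_ff _ _ _ _ _ _ _ _ (by omega) (by omega)]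
    have e1 : ¬ (rr 0 - 1 = rr 0) := by omega
    have e2 : rr 0 = rr 0 - 1 + 1 := by omega
    fin_cases k
    · simp [Ec, Dc]
    · simp only [Dc, if_true, if_neg e1, if_pos e2]
      simp [Nat.cast_sub h0]
    · simp [Dc]
    · simp [Ec, Dc]
      ring
    · simp [Dc]
    · simp [Dc]
  · ext k
    simp only [coord, LinearMap.coe_mk, AddHom.coe_mk]
    have := k.2
    rw [mk_ff _ _ _ _ _ _ _ _ (by omega) (by omega)]
    have : (k : ℕ) ≤ rr 1 - rr 0 := by omega
    simp [Dc, this]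
  · ext k
    simp only [coord, LinearMap.coe_mk, AddHom.coe_mk]
    have := k.2
    rw [mk_fe _ _ _ _ _ _ _ _ (by omega) (by omega)]
    have e : min (k : ℕ) (rr 1) + (k - min (k : ℕ) (rr 1)) = k := by omega
    simp only [Hc, e]
    simp

lemma stab_finrank (rr : Fin 2 → ℕ) (h0 : 1 ≤ rr 0) (h01 : rr 0 < rr 1) :
    Module.finrank ℂ (stabAlg (canA 2 rr) (canB 2 rr)) = 2 * rr 1 + 7 := by
  let f := (coord rr).comp (stabAlg (canA 2 rr) (canB 2 rr)).subtype
  have hf : Function.Bijective f := by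
    constructor
    · rw [← LinearMap.ker_eq_bot, LinearMap.ker_eq_bot']
      intro X hX
      exact Subtype.ext (coord_inj rr h0 h01 X.1 X.2 hX)
    · intro y
      obtain ⟨X, hX, e⟩ := coord_surj rr h0 h01 y
      exact ⟨⟨X, hX⟩, e⟩
  rw [(LinearEquiv.ofBijective f hf).finrank_eq]
  simp only [Module.finrank_prod, Module.finrank_fin_fun]
  omega

/-- For an unbalanced partition `(r₁, r₂)` with `r₁ < r₂`, the Lie
algebra of the stabilizer of the canonical pencil of size `2r + 2`, `r = r₁ + r₂`,
has dimension `2r₂ + 7` over ℂ. -/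
theorem two_parts_unbalanced_stabilizer_dim
    (r₁ r₂ : ℕ) (h₁ : 1 ≤ r₁) (h₁₂ : r₁ < r₂) :
    Module.finrank ℂ (stabAlg (canA 2 ![r₁, r₂]) (canB 2 ![r₁, r₂])) = 2 * r₂ + 7 := by
  exact stab_finrank ![r₁, r₂] h₁ h₁₂
end

section
/- Let h ≥ 1 and 1 ≤ r₁ ≤ r₂ ≤ … ≤ r_h be integers, r = r₁ + … + r_h, N = 2r + h − 1, and let 𝒜, ℬ be the canonical matrices associated to the partition (r₁,…,r_h). Then the ℂ-vector space 𝔤(𝒜,ℬ) of complex (N+1)×(N+1) matrices X such that both Xᵀ𝒜 + 𝒜X and Xᵀℬ + ℬX lie in the ℂ-linear span of {𝒜, ℬ} has dimension over ℂ equal to δ(r₁,…,r_h) = h + 4 + Σ_{1 ≤ i < j ≤ h} (2r_j + 1) + #{(i,j) : 1 ≤ i < j ≤ h and rᵢ = r_j}. -/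
open Matrix

namespace PencilAux

variable {h : ℕ} {rr : Fin h → ℕ}

/-- shifted canonical matrix -/
def canS (h : ℕ) (rr : Fin h → ℕ) (e : ℕ) : Matrix (PencilIdx h rr) (PencilIdx h rr) ℂ :=
  Matrix.of fun u v =>
    if u.1 = v.1 ∧
        (((v.2 : ℕ) = (u.2 : ℕ) + rr u.1 + e ∧ (u.2 : ℕ) < rr u.1) ∨
         ((u.2 : ℕ) = (v.2 : ℕ) + rr u.1 + e ∧ (v.2 : ℕ) < rr u.1)) then 1 else 0

lemma canA_eq : canA h rr = canS h rr 0 := rfl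
lemma canB_eq : canB h rr = canS h rr 1 := rfl

/-- entries indexed by naturals -/
noncomputable def ent (X : Matrix (PencilIdx h rr) (PencilIdx h rr) ℂ) (i : Fin h) (p : ℕ)
    (j : Fin h) (q : ℕ) : ℂ :=
  if hp : p < 2 * rr i + 1 ∧ q < 2 * rr j + 1 then X ⟨i, ⟨p, hp.1⟩⟩ ⟨j, ⟨q, hp.2⟩⟩ else 0

lemma ent_coe (X : Matrix (PencilIdx h rr) (PencilIdx h rr) ℂ) (i : Fin h) (p : ℕ)
    (j : Fin h) (q : ℕ) (hp : p < 2 * rr i + 1) (hq : q < 2 * rr j + 1) :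
    ent X i p j q = X ⟨i, ⟨p, hp⟩⟩ ⟨j, ⟨q, hq⟩⟩ := by
  simp [ent, hp, hq]

lemma ent_add (X Y : Matrix (PencilIdx h rr) (PencilIdx h rr) ℂ) (i : Fin h) (p : ℕ)
    (j : Fin h) (q : ℕ) : ent (X + Y) i p j q = ent X i p j q + ent Y i p j q := by
  unfold ent; split_ifs <;> simp

lemma ent_smul (c : ℂ) (X : Matrix (PencilIdx h rr) (PencilIdx h rr) ℂ) (i : Fin h) (p : ℕ)
    (j : Fin h) (q : ℕ) : ent (c • X) i p j q = c * ent X i p j q := by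
  unfold ent; split_ifs <;> simp

lemma canS_symm (e : ℕ) : (canS h rr e)ᵀ = canS h rr e := by
  ext ⟨i, p⟩ ⟨j, q⟩
  simp only [canS, Matrix.transpose_apply, Matrix.of_apply]
  by_cases hij : i = j
  · subst hij
    congr 1
    simp only [true_and, eq_iff_iff]
    tauto
  · rw [if_neg (fun hc => hij hc.1.symm), if_neg (fun hc => hij hc.1)]

lemma canS_mul (e : ℕ) (he : e ≤ 1) (X : Matrix (PencilIdx h rr) (PencilIdx h rr) ℂ)
    (i : Fin h) (p : ℕ) (hp : p < 2 * rr i + 1) (j : Fin h) (q : ℕ) (hq : q < 2 * rr j + 1) :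
    (canS h rr e * X) ⟨i, ⟨p, hp⟩⟩ ⟨j, ⟨q, hq⟩⟩ =
      if p < rr i then ent X i (rr i + (p + e)) j q
      else if rr i + e ≤ p ∧ p < rr i + rr i + e then ent X i (p - rr i - e) j q else 0 := by
  rw [Matrix.mul_apply]
  split_ifs with h1 h2
  · rw [Finset.sum_eq_single (⟨i, ⟨rr i + (p + e), by omega⟩⟩ : PencilIdx h rr)]
    · rw [ent_coe _ _ _ _ _ (by omega) hq]
      simp only [canS, Matrix.of_apply]
      rw [if_pos ⟨trivial, Or.inl ⟨by omega, h1⟩⟩, one_mul]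
    · rintro ⟨i', q'⟩ - hne
      simp only [canS, Matrix.of_apply]
      rw [if_neg, zero_mul]
      rintro ⟨hii, hc⟩
      subst hii
      apply hne
      congr 1
      ext
      try dsimp only at hc ⊢
      omega
    · simp
  · rw [Finset.sum_eq_single (⟨i, ⟨p - rr i - e, by omega⟩⟩ : PencilIdx h rr)]
    · rw [ent_coe _ _ _ _ _ (by omega) hq]
      simp only [canS, Matrix.of_apply]
      rw [if_pos ⟨trivial, Or.inr ⟨by omega, by omega⟩⟩, one_mul]
    · rintro ⟨i', q'⟩ - hne
      simp only [canS, Matrix.of_apply]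
      rw [if_neg, zero_mul]
      rintro ⟨hii, hc⟩
      subst hii
      apply hne
      congr 1
      ext
      try dsimp only at hc ⊢
      omega
    · simp
  · apply Finset.sum_eq_zero
    rintro ⟨i', q'⟩ -
    simp only [canS, Matrix.of_apply]
    rw [if_neg, zero_mul]
    rintro ⟨hii, hc⟩
    subst hii
    try dsimp only at hc ⊢
    omega

lemma congr_apply (e : ℕ) (he : e ≤ 1) (X : Matrix (PencilIdx h rr) (PencilIdx h rr) ℂ)
    (i : Fin h) (p : ℕ) (hp : p < 2 * rr i + 1) (j : Fin h) (q : ℕ) (hq : q < 2 * rr j + 1) :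
    congrDeriv (canS h rr e) X ⟨i, ⟨p, hp⟩⟩ ⟨j, ⟨q, hq⟩⟩ =
      (if q < rr j then ent X j (rr j + (q + e)) i p
      else if rr j + e ≤ q ∧ q < rr j + rr j + e then ent X j (q - rr j - e) i p else 0) +
      (if p < rr i then ent X i (rr i + (p + e)) j q
      else if rr i + e ≤ p ∧ p < rr i + rr i + e then ent X i (p - rr i - e) j q else 0) := by
  have h1 : congrDeriv (canS h rr e) X = (canS h rr e * X)ᵀ + canS h rr e * X := by
    rw [Matrix.transpose_mul, canS_symm]; rfl
  rw [h1, Matrix.add_apply, Matrix.transpose_apply, canS_mul e he, canS_mul e he]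

/-- the block equations -/
structure BlockEqs (rr : Fin h → ℕ) (X : Matrix (PencilIdx h rr) (PencilIdx h rr) ℂ) (e : ℕ)
    (a b : ℂ) : Prop where
  uu : ∀ i j p q, p < rr i → q < rr j →
    ent X i (rr i + (p + e)) j q + ent X j (rr j + (q + e)) i p = 0
  uw : ∀ i j p q, p < rr i → q ≤ rr j →
    (if e ≤ q ∧ q < rr j + e then ent X j (q - e) i p else 0) +
      ent X i (rr i + (p + e)) j (rr j + q) =
      if i = j then (if q = p then a else 0) + (if q = p + 1 then b else 0) else 0
  ww : ∀ i j p q, p ≤ rr i → q ≤ rr j →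
    (if e ≤ q ∧ q < rr j + e then ent X j (q - e) i (rr i + p) else 0) +
    (if e ≤ p ∧ p < rr i + e then ent X i (p - e) j (rr j + q) else 0) = 0

lemma eq_iff (e : ℕ) (he : e ≤ 1) (X : Matrix (PencilIdx h rr) (PencilIdx h rr) ℂ) (a b : ℂ) :
    a • canS h rr 0 + b • canS h rr 1 = congrDeriv (canS h rr e) X ↔ BlockEqs rr X e a b := by
  have key : ∀ (i : Fin h) (p : ℕ) (hp : p < 2 * rr i + 1) (j : Fin h) (q : ℕ)
      (hq : q < 2 * rr j + 1), (a • canS h rr 0 + b • canS h rr 1) ⟨i, ⟨p, hp⟩⟩ ⟨j, ⟨q, hq⟩⟩ =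
      if i = j then
        (if (q = p + rr i ∧ p < rr i) ∨ (p = q + rr i ∧ q < rr i) then a else 0) +
        (if (q = p + rr i + 1 ∧ p < rr i) ∨ (p = q + rr i + 1 ∧ q < rr i) then b else 0)
      else 0 := by
    intro i p hp j q hq
    simp only [canS, Matrix.add_apply, Matrix.smul_apply, Matrix.of_apply, smul_eq_mul, add_zero]
    by_cases hij : i = j
    · simp [hij]
    · simp [hij]
  have hsub : ∀ r p : ℕ, r + p - r - e = p - e := by intros; omega
  have hc1 : ∀ (r p : ℕ) (x : ℂ), (if r + e ≤ r + p ∧ r + p < r + r + e then x else 0) =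
      (if e ≤ p ∧ p < r + e then x else 0) := by
    intro r p x; congr 1; apply propext; omega
  constructor
  · intro H
    have H' : ∀ (i : Fin h) (p : ℕ) (hp : p < 2 * rr i + 1) (j : Fin h) (q : ℕ)
      (hq : q < 2 * rr j + 1), _ := fun i p hp j q hq =>
        (key i p hp j q hq).symm.trans ((congrFun (congrFun H ⟨i, ⟨p, hp⟩⟩) ⟨j, ⟨q, hq⟩⟩).trans
          (congr_apply e he X i p hp j q hq))
    refine ⟨?_, ?_, ?_⟩
    · intro i j p q hp hq
      have := H' i p (by omega) j q (by omega)
      rw [if_pos hq, if_pos hp] at this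
      rw [add_comm, ← this]
      split_ifs with h1 h2 h3
      · subst h1; omega
      · subst h1; omega
      · subst h1; omega
      · simp
      · rfl
    · intro i j p q hp hq
      have := H' i p (by omega) j (rr j + q) (by omega)
      rw [if_neg (by omega : ¬ (rr j + q < rr j)), if_pos hp, hsub, hc1] at this
      rw [← this]
      by_cases hij : i = j
      · subst hij
        simp only [if_true]
        congr 1
        · congr 1; apply propext; omega
        · congr 1; apply propext; omega
      · simp [hij]
    · intro i j p q hp hq
      have := H' i (rr i + p) (by omega) j (rr j + q) (by omega)
      rw [if_neg (by omega : ¬ (rr j + q < rr j)), if_neg (by omega : ¬ (rr i + p < rr i)),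
        hsub, hc1, hsub, hc1] at this
      rw [← this]
      split_ifs with h1 h2 h3
      · subst h1; omega
      · subst h1; omega
      · subst h1; omega
      · simp
      · rfl
  · rintro ⟨uu, uw, ww⟩
    ext ⟨i, p, hp⟩ ⟨j, q, hq⟩
    rw [key, congr_apply e he]
    rcases lt_or_ge p (rr i) with hpi | hpi
    · rcases lt_or_ge q (rr j) with hqj | hqj
      · rw [if_pos hpi, if_pos hqj, add_comm (ent X j _ _ _), uu i j p q hpi hqj]
        split_ifs with h1 h2 h3
        · subst h1; omega
        · subst h1; omega
        · subst h1; omega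
        · simp
        · rfl
      · obtain ⟨q, rfl⟩ := Nat.exists_eq_add_of_le hqj
        rw [if_pos hpi, if_neg (by omega : ¬ (rr j + q < rr j)), hsub, hc1,
          uw i j p q hpi (by omega)]
        by_cases hij : i = j
        · subst hij
          simp only [if_true]
          congr 1
          · congr 1; apply propext; omega
          · congr 1; apply propext; omega
        · simp [hij]
    · obtain ⟨p, rfl⟩ := Nat.exists_eq_add_of_le hpi
      rcases lt_or_ge q (rr j) with hqj | hqj
      · rw [if_pos hqj, if_neg (by omega : ¬ (rr i + p < rr i)), hsub, hc1, add_comm (ent X j _ _ _),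
          uw j i q p hqj (by omega)]
        by_cases hij : i = j
        · subst hij
          simp only [if_true]
          congr 1
          · congr 1; apply propext; omega
          · congr 1; apply propext; omega
        · simp [hij, Ne.symm hij]
      · obtain ⟨q, rfl⟩ := Nat.exists_eq_add_of_le hqj
        rw [if_neg (by omega : ¬ (rr j + q < rr j)), if_neg (by omega : ¬ (rr i + p < rr i)),
          hsub, hc1, hsub, hc1, ww i j p q (by omega) (by omega)]
        split_ifs with h1 h2 h3
        · subst h1; omega
        · subst h1; omega
        · subst h1; omega
        · simp
        · rfl

lemma mem_iff (X : Matrix (PencilIdx h rr) (PencilIdx h rr) ℂ) :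
    X ∈ stabAlg (canA h rr) (canB h rr) ↔
      ∃ a b c d : ℂ, BlockEqs rr X 0 a b ∧ BlockEqs rr X 1 c d := by
  rw [stabAlg, Submodule.mem_inf, Submodule.mem_comap, Submodule.mem_comap,
    Submodule.mem_span_pair, Submodule.mem_span_pair, canA_eq, canB_eq]
  simp only [eq_iff 0 (by omega), eq_iff 1 le_rfl]
  constructor
  · rintro ⟨⟨a, b, h1⟩, c, d, h2⟩
    exact ⟨a, b, c, d, h1, h2⟩
  · rintro ⟨a, b, c, d, h1, h2⟩
    exact ⟨⟨a, b, h1⟩, c, d, h2⟩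

/-- model -/
noncomputable def E0 (al be ga de : ℂ) (r a b : ℕ) : ℂ :=
  if a = b then (de - al) * a else if b = a + 1 then be * (r - a) else
    if a = b + 1 then ga * a else 0

/-- model -/
noncomputable def D0 (al be ga de : ℂ) (r s p : ℕ) : ℂ :=
  if s = p then al - (de - al) * p else if s = p + 1 then be - be * (r - p) else
    if p = s + 1 then - ga * p else 0

lemma E0D0_zero (al be ga de : ℂ) (r p q : ℕ) (hp : p < r) (hq : q ≤ r) :
    (if q < r then D0 al be ga de r q p else 0) + E0 al be ga de r p q =
      (if q = p then al else 0) + (if q = p + 1 then be else 0) := by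
  unfold E0 D0
  rcases lt_or_eq_of_le hq with h1 | h1
  · rw [if_pos h1]
    split_ifs <;> first | (exfalso; omega) | (subst_vars; push_cast; ring)
  · subst h1
    rw [if_neg (lt_irrefl _)]
    by_cases h2 : q = p + 1
    · subst h2
      simp
    · split_ifs <;> first | (exfalso; omega) | simp

lemma E0D0_one (al be ga de : ℂ) (r p q : ℕ) (hp : p < r) (hq : q ≤ r) :
    (if 1 ≤ q ∧ q < r + 1 then D0 al be ga de r (q - 1) p else 0) + E0 al be ga de r (p + 1) q =
      (if q = p then ga else 0) + (if q = p + 1 then de else 0) := by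
  unfold E0 D0
  rcases Nat.eq_zero_or_pos q with h1 | h1
  · subst h1
    rw [if_neg (by omega)]
    split_ifs <;> first | (exfalso; omega) | (subst_vars; push_cast; ring)
  · obtain ⟨s, rfl⟩ : ∃ s, q = s + 1 := ⟨q - 1, by omega⟩
    rw [if_pos (by omega), Nat.add_sub_cancel]
    split_ifs <;> first | (exfalso; omega) | (subst_vars; push_cast; ring)

/-- model matrix as a function of naturals -/
noncomputable def PhiF (rr : Fin h → ℕ) (al be ga de : ℂ) (G F : Fin h → Fin h → ℕ → ℂ)
    (i : Fin h) (p : ℕ) (j : Fin h) (q : ℕ) : ℂ :=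
  if p < rr i then
    if q < rr j then
      (if i = j then D0 al be ga de (rr i) p q else 0) - (if q ≤ p then G j i (p - q) else 0)
    else 0
  else
    if q < rr j then F i j (p - rr i + q)
    else (if i = j then E0 al be ga de (rr i) (p - rr i) (q - rr j) else 0) +
      (if p - rr i ≤ q - rr j then G i j (q - rr j - (p - rr i)) else 0)

/-- model matrix -/
noncomputable def Phi (rr : Fin h → ℕ) (al be ga de : ℂ) (G F : Fin h → Fin h → ℕ → ℂ) :
    Matrix (PencilIdx h rr) (PencilIdx h rr) ℂ :=
  Matrix.of fun u v => PhiF rr al be ga de G F u.1 u.2 v.1 v.2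

section model
variable (al be ga de : ℂ) (G F : Fin h → Fin h → ℕ → ℂ)

lemma ent_Phi (i : Fin h) (p : ℕ)
    (j : Fin h) (q : ℕ) (hp : p < 2 * rr i + 1) (hq : q < 2 * rr j + 1) :
    ent (Phi rr al be ga de G F) i p j q = PhiF rr al be ga de G F i p j q := by
  rw [ent_coe _ _ _ _ _ hp hq]; rfl

lemma Phi_uu (i : Fin h) (p : ℕ) (j : Fin h) (q : ℕ) (hp : p < rr i) (hq : q < rr j) :
    ent (Phi rr al be ga de G F) i p j q =
      (if i = j then D0 al be ga de (rr i) p q else 0) - (if q ≤ p then G j i (p - q) else 0) := by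
  rw [ent_Phi _ _ _ _ _ _ _ _ _ _ (by omega) (by omega), PhiF, if_pos hp, if_pos hq]

lemma Phi_uw (i : Fin h) (p : ℕ) (j : Fin h) (q : ℕ) (hp : p < rr i) (hq : q ≤ rr j) :
    ent (Phi rr al be ga de G F) i p j (rr j + q) = 0 := by
  rw [ent_Phi _ _ _ _ _ _ _ _ _ _ (by omega) (by omega), PhiF, if_pos hp, if_neg (by omega)]

lemma Phi_wu (i : Fin h) (p : ℕ) (j : Fin h) (q : ℕ) (hp : p ≤ rr i) (hq : q < rr j) :
    ent (Phi rr al be ga de G F) i (rr i + p) j q = F i j (p + q) := by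
  rw [ent_Phi _ _ _ _ _ _ _ _ _ _ (by omega) (by omega), PhiF, if_neg (by omega), if_pos hq,
    Nat.add_sub_cancel_left]

lemma Phi_ww (i : Fin h) (p : ℕ) (j : Fin h) (q : ℕ) (hp : p ≤ rr i) (hq : q ≤ rr j) :
    ent (Phi rr al be ga de G F) i (rr i + p) j (rr j + q) =
    (if i = j then E0 al be ga de (rr i) p q else 0) +
      (if p ≤ q then G i j (q - p) else 0) := by
  rw [ent_Phi _ _ _ _ _ _ _ _ _ _ (by omega) (by omega), PhiF, if_neg (by omega),
    if_neg (by omega), Nat.add_sub_cancel_left, Nat.add_sub_cancel_left]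

lemma Phi_zero (hG : ∀ i j k, rr j < k + rr i → G i j k = 0)
    (hF : ∀ i j k, F i j k + F j i k = 0) :
    BlockEqs rr (Phi rr al be ga de G F) 0 al be := by
  refine ⟨?_, ?_, ?_⟩
  · intro i j p q hp hq
    rw [Phi_wu _ _ _ _ _ _ _ _ _ _ (by omega) (by omega),
      Phi_wu _ _ _ _ _ _ _ _ _ _ (by omega) (by omega), ← hF i j (p + q)]
    congr 2; omega
  · intro i j p q hp hq
    rw [Phi_ww _ _ _ _ _ _ _ _ _ _ (by omega) (by omega)]
    have h1 : (if 0 ≤ q ∧ q < rr j + 0 then ent (Phi rr al be ga de G F) j (q - 0) i p else 0) =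
        (if i = j then (if q < rr i then D0 al be ga de (rr i) q p else 0) else 0) -
        (if p ≤ q then G i j (q - p) else 0) := by
      by_cases hq' : q < rr j
      · rw [if_pos (by omega), Nat.sub_zero, Phi_uu _ _ _ _ _ _ _ _ _ _ hq' hp]
        by_cases hij : i = j
        · subst hij; simp [hq']
        · simp [hij, Ne.symm hij]
      · rw [if_neg (by omega)]
        have h3 : (if i = j then (if q < rr i then D0 al be ga de (rr i) q p else 0) else 0) = 0 := by
          split_ifs with h1 h2
          · subst h1; omega
          · rfl
          · rfl
        rw [h3]
        split_ifs with h1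
        · rw [hG _ _ _ (by omega)]; simp
        · simp
    rw [h1]
    by_cases hij : i = j
    · subst hij
      simp only [if_true]
      rw [← E0D0_zero al be ga de (rr i) p q hp hq]
      rw [Nat.add_zero]
      ring
    · simp [hij]
  · intro i j p q hp hq
    have h1 : ∀ (i j : Fin h) (p q : ℕ), p ≤ rr i → q ≤ rr j →
      (if 0 ≤ q ∧ q < rr j + 0 then
        ent (Phi rr al be ga de G F) j (q - 0) i (rr i + p) else 0) = 0 := by
      intro i j p q hp hq
      split_ifs with h1
      · rw [Phi_uw _ _ _ _ _ _ _ _ _ _ (by omega) hp]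
      · rfl
    rw [h1 i j p q hp hq, h1 j i q p hq hp, add_zero]

lemma Phi_one (hF : ∀ i j k, F i j k + F j i k = 0) :
    BlockEqs rr (Phi rr al be ga de G F) 1 ga de := by
  refine ⟨?_, ?_, ?_⟩
  · intro i j p q hp hq
    rw [Phi_wu _ _ _ _ _ _ _ _ _ _ (by omega) (by omega),
      Phi_wu _ _ _ _ _ _ _ _ _ _ (by omega) (by omega), ← hF i j (p + 1 + q)]
    congr 2; omega
  · intro i j p q hp hq
    rw [Phi_ww _ _ _ _ _ _ _ _ _ _ (by omega) (by omega)]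
    have h1 : (if 1 ≤ q ∧ q < rr j + 1 then ent (Phi rr al be ga de G F) j (q - 1) i p else 0) =
        (if i = j then (if 1 ≤ q ∧ q < rr i + 1 then D0 al be ga de (rr i) (q - 1) p else 0)
          else 0) -
        (if p + 1 ≤ q then G i j (q - (p + 1)) else 0) := by
      by_cases hq' : 1 ≤ q
      · have h5 : q - 1 - p = q - (p + 1) := by omega
        have h6 : (p ≤ q - 1) ↔ (p + 1 ≤ q) := by omega
        rw [if_pos (by omega), Phi_uu _ _ _ _ _ _ _ _ _ _ (by omega) hp, h5]
        by_cases hij : i = j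
        · subst hij; simp [hq', h6, Nat.lt_succ_of_le hq]
        · simp [hij, Ne.symm hij, h6]
      · rw [if_neg (by omega), if_neg (by omega : ¬ (p + 1 ≤ q)),
          if_neg (by omega : ¬ (1 ≤ q ∧ q < rr i + 1))]
        simp
    rw [h1]
    by_cases hij : i = j
    · subst hij
      simp only [if_true]
      rw [← E0D0_one al be ga de (rr i) p q hp hq]
      ring
    · simp [hij]
  · intro i j p q hp hq
    have h1 : ∀ (i j : Fin h) (p q : ℕ), p ≤ rr i → q ≤ rr j →
      (if 1 ≤ q ∧ q < rr j + 1 then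
        ent (Phi rr al be ga de G F) j (q - 1) i (rr i + p) else 0) = 0 := by
      intro i j p q hp hq
      split_ifs with h1
      · rw [Phi_uw _ _ _ _ _ _ _ _ _ _ (by omega) hp]
      · rfl
    rw [h1 i j p q hp hq, h1 j i q p hq hp, add_zero]

end model

lemma ent_zero (X : Matrix (PencilIdx h rr) (PencilIdx h rr) ℂ)
    (huu : ∀ i j p q, p < rr i → q < rr j → ent X i p j q = 0)
    (huw : ∀ i j p q, p < rr i → q ≤ rr j → ent X i p j (rr j + q) = 0)
    (hwu : ∀ i j p q, p ≤ rr i → q < rr j → ent X i (rr i + p) j q = 0)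
    (hww : ∀ i j p q, p ≤ rr i → q ≤ rr j → ent X i (rr i + p) j (rr j + q) = 0) : X = 0 := by
  ext ⟨i, p, hp⟩ ⟨j, q, hq⟩
  rw [← ent_coe X i p j q hp hq, Matrix.zero_apply]
  rcases lt_or_ge p (rr i) with hpi | hpi <;> rcases lt_or_ge q (rr j) with hqj | hqj
  · exact huu i j p q hpi hqj
  · obtain ⟨q, rfl⟩ := Nat.exists_eq_add_of_le hqj
    exact huw i j p q hpi (by omega)
  · obtain ⟨p, rfl⟩ := Nat.exists_eq_add_of_le hpi
    exact hwu i j p q (by omega) hqj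
  · obtain ⟨p, rfl⟩ := Nat.exists_eq_add_of_le hpi
    obtain ⟨q, rfl⟩ := Nat.exists_eq_add_of_le hqj
    exact hww i j p q (by omega) (by omega)

lemma inj_aux (i0 : Fin h) (hpos : ∀ i, 1 ≤ rr i)
    (X : Matrix (PencilIdx h rr) (PencilIdx h rr) ℂ)
    (a b c d : ℂ) (H0 : BlockEqs rr X 0 a b) (H1 : BlockEqs rr X 1 c d)
    (r1 : ent X i0 (rr i0 + 0) i0 (rr i0 + 0) + ent X i0 0 i0 0 = 0)
    (r2 : ent X i0 (rr i0 + (rr i0 - 1)) i0 (rr i0 + rr i0) = 0)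
    (r3 : ent X i0 (rr i0 + 1) i0 (rr i0 + 0) = 0)
    (r4 : ent X i0 (rr i0 + 1) i0 (rr i0 + 1) + ent X i0 0 i0 0 = 0)
    (hg : ∀ i j k, k + rr i ≤ rr j → ent X i (rr i + 0) j (rr j + k) = 0)
    (hf : ∀ i j k, i < j → k < rr i + rr j → ent X i (rr i + min k (rr i)) j (k - rr i) = 0) :
    X = 0 := by
  have h0 := hpos i0
  have ha : a = 0 := by
    have := H0.uw i0 i0 0 0 (by omega) (by omega)
    rw [if_pos (by omega)] at this
    simp at this
    simp at r1
    rw [← this, add_comm, r1]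
  have hb : b = 0 := by
    have := H0.uw i0 i0 (rr i0 - 1) (rr i0) (by omega) (by omega)
    rw [if_neg (by omega), if_pos rfl, if_neg (by omega), if_pos (by omega), Nat.add_zero, r2] at this
    simpa using this.symm
  have hc : c = 0 := by
    have := H1.uw i0 i0 0 0 (by omega) (by omega)
    rw [if_neg (by omega), if_pos rfl, if_pos (by omega), if_neg (by omega), Nat.zero_add, r3] at this
    simpa using this.symm
  have hd : d = 0 := by
    have := H1.uw i0 i0 0 1 (by omega) (by omega)
    rw [if_pos (by omega), if_pos rfl, if_neg (by omega), if_pos (by omega), Nat.zero_add,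
      Nat.sub_self, add_comm, r4] at this
    simpa using this.symm
  subst ha hb hc hd
  -- W W block
  have uw0 : ∀ i j p q, p < rr i → q < rr j → ent X j q i p + ent X i (rr i + p) j (rr j + q) = 0 := by
    intro i j p q hp hq
    have := H0.uw i j p q hp hq.le
    rw [if_pos (by omega)] at this
    simpa using this
  have uw0r : ∀ i j p, p < rr i → ent X i (rr i + p) j (rr j + rr j) = 0 := by
    intro i j p hp
    have := H0.uw i j p (rr j) hp le_rfl
    rw [if_neg (by omega)] at this
    simpa using this
  have uw1 : ∀ i j p q, p < rr i → q < rr j →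
      ent X j q i p + ent X i (rr i + (p + 1)) j (rr j + (q + 1)) = 0 := by
    intro i j p q hp hq
    have := H1.uw i j p (q + 1) hp hq
    rw [if_pos (by omega), Nat.add_sub_cancel] at this
    simpa using this
  have uw10 : ∀ i j p, p < rr i → ent X i (rr i + (p + 1)) j (rr j + 0) = 0 := by
    intro i j p hp
    have := H1.uw i j p 0 hp (by omega)
    rw [if_neg (by omega)] at this
    simpa using this
  have wwS : ∀ i j p q, p < rr i → q < rr j →
      ent X i (rr i + (p + 1)) j (rr j + (q + 1)) = ent X i (rr i + p) j (rr j + q) := by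
    intro i j p q hp hq
    linear_combination uw1 i j p q hp hq - uw0 i j p q hp hq
  have ww0 : ∀ i j q, q ≤ rr j → ent X i (rr i + 0) j (rr j + q) = 0 := by
    intro i j q hq
    by_cases hq' : q + rr i ≤ rr j
    · exact hg i j q hq'
    · have : ∀ t, t + q ≤ rr j →
        ent X i (rr i + t) j (rr j + (q + t)) = ent X i (rr i + 0) j (rr j + q) := by
        intro t
        induction t with
        | zero => intro _; rfl
        | succ t ih =>
          intro ht
          rw [← ih (by omega), ← wwS i j t (q + t) (by omega) (by omega)]
          rfl
      rw [← this (rr j - q) (by omega), show q + (rr j - q) = rr j by omega]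
      exact uw0r i j _ (by omega)
  have hww : ∀ i j p q, p ≤ rr i → q ≤ rr j → ent X i (rr i + p) j (rr j + q) = 0 := by
    intro i j p
    induction p with
    | zero => intro q _ hq; exact ww0 i j q hq
    | succ p ih =>
      intro q hp hq
      rcases q with _ | q
      · exact uw10 i j p (by omega)
      · rw [wwS i j p q (by omega) (by omega)]
        exact ih q (by omega) (by omega)
  have huu : ∀ i j p q, p < rr i → q < rr j → ent X i p j q = 0 := by
    intro i j p q hp hq
    have := uw0 j i q p hq hp
    rw [hww j i q p hq.le hp.le] at this
    simpa using this
  -- U W block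
  have e0 : ∀ i j p q, p < rr i → q < rr j →
      ent X j q i (rr i + p) + ent X i p j (rr j + q) = 0 := by
    intro i j p q hp hq
    have := H0.ww i j p q hp.le hq.le
    rw [if_pos (by omega), if_pos (by omega)] at this
    exact this
  have e0r : ∀ i j p, p < rr i → ent X i p j (rr j + rr j) = 0 := by
    intro i j p hp
    have := H0.ww i j p (rr j) hp.le le_rfl
    rw [if_neg (by omega), if_pos (by omega), zero_add] at this
    exact this
  have e1 : ∀ i j p q, p < rr i → q < rr j →
      ent X j q i (rr i + (p + 1)) + ent X i p j (rr j + (q + 1)) = 0 := by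
    intro i j p q hp hq
    have := H1.ww i j (p + 1) (q + 1) hp hq
    rw [if_pos (by omega), if_pos (by omega)] at this
    exact this
  have e10 : ∀ i j p, p < rr i → ent X i p j (rr j + 0) = 0 := by
    intro i j p hp
    have := H1.ww i j (p + 1) 0 hp (by omega)
    rw [if_neg (by omega), if_pos (by omega), zero_add] at this
    exact this
  have huw : ∀ i j p q, p < rr i → q ≤ rr j → ent X i p j (rr j + q) = 0 := by
    intro i j p
    induction p with
    | zero =>
      intro q hp hq
      rcases lt_or_eq_of_le hq with hq' | hq'
      · have := e0 i j 0 q hp hq'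
        rw [e10 j i q hq', zero_add] at this
        exact this
      · rw [hq']; exact e0r i j _ hp
    | succ p ih =>
      intro q hp hq
      rcases lt_or_eq_of_le hq with hq' | hq'
      · have h1 := e0 i j (p + 1) q hp hq'
        have h2 := e1 i j p q (by omega) hq'
        rw [ih (q + 1) (by omega) hq'] at h2
        linear_combination h1 - h2
      · rw [hq']; exact e0r i j _ hp
  -- W U block
  have t0 : ∀ i j p q, p < rr i → q < rr j →
      ent X i (rr i + p) j q + ent X j (rr j + q) i p = 0 := fun i j p q hp hq => H0.uu i j p q hp hq
  have t1 : ∀ i j p q, p < rr i → q < rr j →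
      ent X i (rr i + (p + 1)) j q + ent X j (rr j + (q + 1)) i p = 0 :=
    fun i j p q hp hq => H1.uu i j p q hp hq
  have tH : ∀ i j p q, p < rr i → q + 1 < rr j →
      ent X i (rr i + p) j (q + 1) = ent X i (rr i + (p + 1)) j q := by
    intro i j p q hp hq
    linear_combination t0 i j p (q + 1) hp hq - t1 i j p q hp (by omega)
  have tlt : ∀ i j, i < j → ∀ q p, p ≤ rr i → q < rr j → ent X i (rr i + p) j q = 0 := by
    intro i j hij q
    induction q with
    | zero =>
      intro p hp hq
      have := hf i j p hij (by omega)
      rwa [min_eq_left hp, show p - rr i = 0 by omega] at this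
    | succ q ih =>
      intro p hp hq
      rcases lt_or_eq_of_le hp with hp' | hp'
      · rw [tH i j p q hp' hq]
        exact ih _ hp' (by omega)
      · have := hf i j (rr i + (q + 1)) hij (by omega)
        rw [min_eq_right (by omega), show rr i + (q + 1) - rr i = q + 1 by omega] at this
        rw [hp']; exact this
  have tgt : ∀ i j, i < j → ∀ q p, p ≤ rr j → q < rr i → ent X j (rr j + p) i q = 0 := by
    intro i j hij q p hp hq
    rcases p with _ | p
    · have := t0 i j q 0 hq (by have := hpos j; omega)
      rw [tlt i j hij _ _ hq.le (hpos j)] at this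
      simpa using this
    · have := t1 i j q p hq hp
      rw [tlt i j hij _ _ hq hp] at this
      simpa using this
  have self0 : ∀ i p, p < rr i → ent X i (rr i + p) i p = 0 := by
    intro i p hp
    have := t0 i i p p hp hp
    linear_combination (1 / 2) * this
  have self1 : ∀ i p, p < rr i → ent X i (rr i + (p + 1)) i p = 0 := by
    intro i p hp
    have := t1 i i p p hp hp
    linear_combination (1 / 2) * this
  have tle : ∀ i n p q, q ≤ p + n → p ≤ q → q < rr i → ent X i (rr i + p) i q = 0 := by
    intro i n
    induction n with
    | zero =>
      intro p q h1 h2 h3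
      obtain rfl : p = q := by omega
      exact self0 i p h3
    | succ n ih =>
      intro p q h1 h2 h3
      rcases Nat.eq_or_lt_of_le h2 with h4 | h4
      · subst h4; exact self0 i p h3
      · obtain ⟨q, rfl⟩ : ∃ s, q = s + 1 := ⟨q - 1, by omega⟩
        rw [tH i i p q (by omega) h3]
        rcases Nat.eq_or_lt_of_le h4 with h5 | h5
        · obtain rfl : p = q := by omega
          exact self1 i p (by omega)
        · exact ih _ _ (by omega) (by omega) (by omega)
  have tself : ∀ i p q, p ≤ rr i → q < rr i → ent X i (rr i + p) i q = 0 := by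
    intro i p q hp hq
    rcases le_or_gt p q with h1 | h1
    · exact tle i q p q (by omega) h1 hq
    · obtain ⟨s, rfl⟩ : ∃ s, p = s + 1 := ⟨p - 1, by omega⟩
      rcases Nat.eq_or_lt_of_le h1 with h2 | h2
      · obtain rfl : q = s := by omega
        exact self1 i q hq
      · have := t1 i i s q (by omega) hq
        rw [tle i s (q + 1) s (by omega) (by omega) (by omega)] at this
        simpa using this
  refine ent_zero X huu huw ?_ hww
  intro i j p q hp hq
  rcases lt_trichotomy i j with h1 | h1 | h1
  · exact tlt i j h1 q p hp hq
  · subst h1; exact tself i p q hp hq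
  · exact tgt j i h1 q p hp hq

/-- parameters of Toeplitz type -/
abbrev S1 (rr : Fin h → ℕ) := (ij : Fin h × Fin h) × Fin (rr ij.2 + 1 - rr ij.1)
/-- parameters of Hankel type -/
abbrev S2 (rr : Fin h → ℕ) :=
  (ij : Fin h × Fin h) × Fin (if ij.1 < ij.2 then rr ij.1 + rr ij.2 else 0)

/-- read-out map -/
noncomputable def Psi (rr : Fin h → ℕ) (i0 : Fin h) :
    Matrix (PencilIdx h rr) (PencilIdx h rr) ℂ →ₗ[ℂ] (Fin 4 → ℂ) × (S1 rr → ℂ) × (S2 rr → ℂ) where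
  toFun X := (![ent X i0 (rr i0 + 0) i0 (rr i0 + 0) + ent X i0 0 i0 0,
      ent X i0 (rr i0 + (rr i0 - 1)) i0 (rr i0 + rr i0),
      ent X i0 (rr i0 + 1) i0 (rr i0 + 0),
      ent X i0 (rr i0 + 1) i0 (rr i0 + 1) + ent X i0 0 i0 0],
    fun s => ent X s.1.1 (rr s.1.1 + 0) s.1.2 (rr s.1.2 + s.2),
    fun s => ent X s.1.1 (rr s.1.1 + min (s.2 : ℕ) (rr s.1.1)) s.1.2 (s.2 - rr s.1.1))
  map_add' X Y := by
    refine Prod.ext ?_ (Prod.ext ?_ ?_)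
    · funext k
      fin_cases k <;> simp [ent_add] <;> ring
    · funext s; simp [ent_add]
    · funext s; simp [ent_add]
  map_smul' c X := by
    refine Prod.ext ?_ (Prod.ext ?_ ?_)
    · funext k
      fin_cases k <;> simp [ent_smul] <;> ring
    · funext s; simp [ent_smul]
    · funext s; simp [ent_smul]

lemma Psi_inj (i0 : Fin h) (hpos : ∀ i, 1 ≤ rr i) (X : Matrix (PencilIdx h rr) (PencilIdx h rr) ℂ)
    (hX : X ∈ stabAlg (canA h rr) (canB h rr)) (h0 : Psi rr i0 X = 0) : X = 0 := by
  obtain ⟨a, b, c, d, H0, H1⟩ := (mem_iff X).1 hX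
  have k1 := congrArg Prod.fst h0
  have k2 := congrArg (fun z => z.2.1) h0
  have k3 := congrArg (fun z => z.2.2) h0
  refine inj_aux i0 hpos X a b c d H0 H1 (congrFun k1 0) (congrFun k1 1) (congrFun k1 2)
    (congrFun k1 3) ?_ ?_
  · intro i j k hk
    exact congrFun k2 ⟨(i, j), ⟨k, by dsimp only; omega⟩⟩
  · intro i j k hij hk
    exact congrFun k3 ⟨(i, j), ⟨k, by rw [if_pos hij]; exact hk⟩⟩

lemma Psi_surj (i0 : Fin h) (hpos : ∀ i, 1 ≤ rr i)
    (y : (Fin 4 → ℂ) × (S1 rr → ℂ) × (S2 rr → ℂ)) :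
    ∃ X ∈ stabAlg (canA h rr) (canB h rr), Psi rr i0 X = y := by
  obtain ⟨c, g, f⟩ := y
  set G : Fin h → Fin h → ℕ → ℂ := fun i j k =>
    if hk : k < rr j + 1 - rr i then g ⟨(i, j), ⟨k, hk⟩⟩ else 0 with hGdef
  set F0 : Fin h → Fin h → ℕ → ℂ := fun i j k =>
    if hk : k < (if i < j then rr i + rr j else 0) then f ⟨(i, j), ⟨k, hk⟩⟩ else 0 with hF0
  set F : Fin h → Fin h → ℕ → ℂ := fun i j k => F0 i j k - F0 j i k with hFdef
  have hG : ∀ i j k, rr j < k + rr i → G i j k = 0 := by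
    intro i j k hk
    simp only [hGdef]
    rw [dif_neg (by omega)]
  have hF : ∀ i j k, F i j k + F j i k = 0 := by
    intro i j k
    simp only [hFdef]; ring
  have h1 := hpos i0
  refine ⟨Phi rr (c 0) (c 1) (c 2) (c 3) G F, (mem_iff _).2 ⟨c 0, c 1, c 2, c 3,
    Phi_zero _ _ _ _ _ _ hG hF, Phi_one _ _ _ _ _ _ hF⟩, ?_⟩
  refine Prod.ext ?_ (Prod.ext ?_ ?_)
  · funext k
    fin_cases k
    · change ent _ i0 (rr i0 + 0) i0 (rr i0 + 0) + ent _ i0 0 i0 0 = c 0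
      rw [Phi_ww _ _ _ _ _ _ _ _ _ _ (by omega) (by omega),
        Phi_uu _ _ _ _ _ _ _ _ _ _ (by omega) (by omega)]
      simp [E0, D0]
    · change ent _ i0 (rr i0 + (rr i0 - 1)) i0 (rr i0 + rr i0) = c 1
      rw [Phi_ww _ _ _ _ _ _ _ _ _ _ (by omega) (by omega), hG _ _ _ (by omega)]
      rw [if_pos rfl, E0, if_neg (by omega), if_pos (by omega), Nat.cast_sub h1]
      simp
    · change ent _ i0 (rr i0 + 1) i0 (rr i0 + 0) = c 2
      rw [Phi_ww _ _ _ _ _ _ _ _ _ _ (by omega) (by omega)]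
      simp [E0]
    · change ent _ i0 (rr i0 + 1) i0 (rr i0 + 1) + ent _ i0 0 i0 0 = c 3
      rw [Phi_ww _ _ _ _ _ _ _ _ _ _ (by omega) (by omega),
        Phi_uu _ _ _ _ _ _ _ _ _ _ (by omega) (by omega)]
      simp [E0, D0]
  · funext ⟨⟨i, j⟩, k, hk⟩
    change ent _ i (rr i + 0) j (rr j + k) = g ⟨(i, j), ⟨k, hk⟩⟩
    dsimp only at hk
    have hi := hpos i
    have hj := hpos j
    rw [Phi_ww _ _ _ _ _ _ _ _ _ _ (by omega) (by omega), if_pos (Nat.zero_le _), Nat.sub_zero]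
    have h2 : G i j k = g ⟨(i, j), ⟨k, hk⟩⟩ := by
      simp only [hGdef]; rw [dif_pos hk]
    rw [h2]
    by_cases hij : i = j
    · subst hij
      obtain rfl : k = 0 := by omega
      simp [E0]
    · simp [hij]
  · funext ⟨⟨i, j⟩, k, hk⟩
    change ent _ i (rr i + min k (rr i)) j (k - rr i) = f ⟨(i, j), ⟨k, hk⟩⟩
    have hij : i < j := by
      by_contra hn
      simp [hn] at hk
    have hk' := hk
    simp only [hij, if_true] at hk'
    have hj := hpos j
    rw [Phi_wu _ _ _ _ _ _ _ _ _ _ (by omega) (by omega),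
      show min k (rr i) + (k - rr i) = k by omega]
    have h2 : F0 i j k = f ⟨(i, j), ⟨k, hk⟩⟩ := by
      simp only [hF0]; rw [dif_pos hk]
    have h3 : F0 j i k = 0 := by
      simp only [hF0]; rw [dif_neg]; rw [if_neg (not_lt_of_gt hij)]; omega
    simp only [hFdef]
    rw [h2, h3, sub_zero]

lemma finrank_eq (i0 : Fin h) (hpos : ∀ i, 1 ≤ rr i) :
    Module.finrank ℂ (stabAlg (canA h rr) (canB h rr)) =
      4 + ((∑ ij : Fin h × Fin h, (rr ij.2 + 1 - rr ij.1)) +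
        ∑ ij : Fin h × Fin h, (if ij.1 < ij.2 then rr ij.1 + rr ij.2 else 0)) := by
  have e : (stabAlg (canA h rr) (canB h rr)) ≃ₗ[ℂ] (Fin 4 → ℂ) × (S1 rr → ℂ) × (S2 rr → ℂ) := by
    refine LinearEquiv.ofBijective ((Psi rr i0).comp (Submodule.subtype _)) ⟨?_, ?_⟩
    · rw [← LinearMap.ker_eq_bot, LinearMap.ker_eq_bot']
      rintro ⟨X, hX⟩ h0
      exact Subtype.ext (Psi_inj i0 hpos X hX h0)
    · intro y
      obtain ⟨X, hX, hy⟩ := Psi_surj i0 hpos y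
      exact ⟨⟨X, hX⟩, hy⟩
  rw [e.finrank_eq, Module.finrank_prod, Module.finrank_prod, Module.finrank_fintype_fun_eq_card,
    Module.finrank_fintype_fun_eq_card, Module.finrank_fintype_fun_eq_card, Fintype.card_sigma,
    Fintype.card_sigma]
  simp

lemma count (hmono : Monotone rr) :
    (∑ ij : Fin h × Fin h, (rr ij.2 + 1 - rr ij.1)) +
        ∑ ij : Fin h × Fin h, (if ij.1 < ij.2 then rr ij.1 + rr ij.2 else 0) =
    h + (∑ p ∈ Finset.univ.filter (fun p : Fin h × Fin h => p.1 < p.2), (2 * rr p.2 + 1)) +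
        (Finset.univ.filter
          (fun p : Fin h × Fin h => p.1 < p.2 ∧ rr p.1 = rr p.2)).card := by
  have h1 : (∑ ij : Fin h × Fin h, (rr ij.2 + 1 - rr ij.1)) =
      (∑ ij : Fin h × Fin h, (if ij.1 < ij.2 then rr ij.2 + 1 - rr ij.1 else 0)) +
      (∑ ij : Fin h × Fin h, (if ij.1 = ij.2 then 1 else 0)) +
      (∑ ij : Fin h × Fin h, (if ij.1 < ij.2 ∧ rr ij.1 = rr ij.2 then 1 else 0)) := by
    have h2 : (∑ ij : Fin h × Fin h, (if ij.1 < ij.2 ∧ rr ij.1 = rr ij.2 then 1 else 0)) =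
        (∑ ij : Fin h × Fin h, (if ij.2 < ij.1 ∧ rr ij.2 = rr ij.1 then 1 else 0)) :=
      Fintype.sum_equiv (Equiv.prodComm _ _) _ _ (fun _ => rfl)
    rw [h2, ← Finset.sum_add_distrib, ← Finset.sum_add_distrib]
    apply Finset.sum_congr rfl
    rintro ⟨i, j⟩ -
    dsimp only
    rcases lt_trichotomy i j with hij | hij | hij
    · simp [hij, hij.ne, hij.le, not_lt_of_gt hij]
    · subst hij; simp
    · have := hmono hij.le
      simp only [hij, hij.ne', not_lt_of_gt hij, if_false, true_and]
      split_ifs <;> omega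
  have h3 : (∑ ij : Fin h × Fin h, (if ij.1 = ij.2 then 1 else 0)) = h := by
    rw [Fintype.sum_prod_type]
    simp
  rw [h1, h3, Finset.card_filter, Finset.sum_filter]
  have h4 : (∑ ij : Fin h × Fin h, (if ij.1 < ij.2 then rr ij.2 + 1 - rr ij.1 else 0)) +
      (∑ ij : Fin h × Fin h, (if ij.1 < ij.2 then rr ij.1 + rr ij.2 else 0)) =
      ∑ ij : Fin h × Fin h, (if ij.1 < ij.2 then 2 * rr ij.2 + 1 else 0) := by
    rw [← Finset.sum_add_distrib]
    apply Finset.sum_congr rfl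
    rintro ⟨i, j⟩ -
    dsimp only
    split_ifs with hij
    · have := hmono hij.le
      omega
    · rfl
  omega

end PencilAux

/-- The Lie algebra of the stabilizer of the canonical pencil of a
partition `(r₁, …, r_h)` of `r` has dimension
`δ = h + 4 + Σ_{i<j} (2 r_j + 1) + #{(i,j) : i < j, rᵢ = r_j}` over ℂ. -/
theorem canonical_pencil_stabilizer_dim
    (h : ℕ) (hh : 1 ≤ h) (rr : Fin h → ℕ) (hmono : Monotone rr) (hpos : ∀ i, 1 ≤ rr i)
    (r : ℕ) (hsum : ∑ i, rr i = r) :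
    Module.finrank ℂ (stabAlg (canA h rr) (canB h rr)) =
      h + 4 +
        (∑ p ∈ Finset.univ.filter (fun p : Fin h × Fin h => p.1 < p.2), (2 * rr p.2 + 1)) +
        (Finset.univ.filter
          (fun p : Fin h × Fin h => p.1 < p.2 ∧ rr p.1 = rr p.2)).card := by
  rw [PencilAux.finrank_eq ⟨0, hh⟩ hpos, PencilAux.count hmono]
  omega
end
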